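/- arXiv:1606.05306 — 3 statements merged into one kernel-verified Lean document; each statement's English description precedes it below -/
import Mathlib

section
/- Let s be an even integer with s ≥ 6 and let N ≥ 2s. Then for every t ∈ [−π,π] \ {0} and every l ∈ {0,1,2,3}, the l-th derivative of σ̃_N satisfies |σ̃_N^{(l)}(t)| ≤ c_{l,s}/((N+1)^{s−l}·|t|^s), where c_{0,s} = 1.02·(s−1)!·2^s·s, c_{1,s} = 1.02·(s−1)!·2^s·2s, c_{2,s} = 1.02·(s−1)!·2^s·(4s+1), and c_{3,s} = 1.02·(s−1)!·2^s·(9s−2). -/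
noncomputable section

/-- iterated integrals of the sign of the Chebyshev polynomial: the perfect B-spline chain -/
def fspline (s : ℕ) : ℕ → ℝ → ℝ
  | 0 => fun x => (-1 : ℝ) ^ (s - 1) * Real.sign ((Polynomial.Chebyshev.U ℝ ((s : ℤ) - 1)).eval x)
  | (k + 1) => fun x => ∫ t in (-1 : ℝ)..x, fspline s k t

/-- the scaled perfect B-spline g̃_{s-1} -/
def gtilde (s : ℕ) (x : ℝ) : ℝ := fspline s (s - 1) (2 * x)

/-- discrete norm ‖g̃‖_{1,N} -/
def gnorm (s N : ℕ) : ℝ :=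
  ∑ k ∈ Finset.Icc (-(N : ℤ)) (N : ℤ), gtilde s ((k : ℝ) / (2 * ((N : ℝ) + 1)))

/-- the trigonometric kernel σ̃_N (real-valued) -/
def sigmaT (s N : ℕ) (t : ℝ) : ℝ :=
  ((1 / (gnorm s N : ℂ)) *
      ∑ k ∈ Finset.Icc (-(N : ℤ)) (N : ℤ),
        (gtilde s ((k : ℝ) / (2 * ((N : ℝ) + 1))) : ℂ) * Complex.exp ((k : ℂ) * t * Complex.I)).re

/-- constants c_{l,s} -/
def cConst : ℕ → ℕ → ℝ
  | 0, s => 1.02 * (Nat.factorial (s - 1)) * 2 ^ s * s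
  | 1, s => 1.02 * (Nat.factorial (s - 1)) * 2 ^ s * (2 * s)
  | 2, s => 1.02 * (Nat.factorial (s - 1)) * 2 ^ s * (4 * s + 1)
  | _, s => 1.02 * (Nat.factorial (s - 1)) * 2 ^ s * (9 * s - 2)

end

open scoped Real

/-!
Write `M = N + 1` and `f_k` for `fspline s k`. The sign pattern of `U_{s-1}` makes `f_0` orthogonal
to all polynomials of degree less than `s - 1`, so every `f_k` with `1 ≤ k < s` vanishes at both
ends of `[-1, 1]`. Hence `s` integrations by parts are free of boundary terms until they reach the
jumps of `f_0`, which gives `|∫ f_{s-1}(x) x^l e^{iωx} dx| ≤ 2 d_{l,s} / |ω|^s`; for `l = 2, 3` the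
terms in which powers of `x` have been differentiated are controlled by the sup norms of `f_0`,
`f_1`, `f_2`. Poisson summation writes the kernel sum at `t` as a sum of these integrals over the
frequencies `M (t - 2πn)`. Since `|t - 2πn| ≥ |t| |2n ± 1|` the whole sum costs a factor `π⁴ / 48`,
while at `t = 0` all frequencies except `n = 0` perturb the main term `M ∫ f_{s-1}`, the continuous
counterpart of `gnorm`, by a relative error of at most `1 / 360`.
-/

open MeasureTheory Set intervalIntegral Polynomial.Chebyshev

/-! ### Integration by parts against a primitive -/

section IntegrationByParts

variable {f : ℝ → ℝ} {a b : ℝ}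

lemma integral_primitive_mul_deriv (hf : IntervalIntegrable f volume a b) {φ φ' : ℝ → ℝ}
    (hφ : ∀ x, HasDerivAt φ (φ' x) x) (hφ' : Continuous φ') :
    ∫ x in a..b, (∫ t in a..x, f t) * φ' x =
      (∫ t in a..b, f t) * φ b - ∫ x in a..b, f x * φ x := by
  have deriv_φ : deriv φ = φ' := funext fun x => (hφ x).deriv
  have hφ_contDiff : ContDiff ℝ 1 φ :=
    contDiff_one_iff_deriv.2 ⟨fun x => (hφ x).differentiableAt, deriv_φ ▸ hφ'⟩
  have parts := (hf.absolutelyContinuousOnInterval_intervalIntegral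
    left_mem_uIcc).integral_mul_deriv_eq_deriv_mul
      hφ_contDiff.contDiffOn.absolutelyContinuousOnInterval
  have deriv_primitive : ∫ x in a..b, deriv (fun x => ∫ t in a..x, f t) x * φ x =
      ∫ x in a..b, f x * φ x := by
    refine integral_congr_ae ?_
    filter_upwards [hf.ae_hasDerivAt_integral] with x hx hmem
    rw [(hx (uIoc_subset_uIcc hmem) a left_mem_uIcc).deriv]
  rwa [deriv_φ, deriv_primitive, integral_same, zero_mul, sub_zero] at parts

lemma integral_primitive_mul_deriv_complex (hf : IntervalIntegrable f volume a b) {φ φ' : ℝ → ℂ}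
    (hφ : ∀ x, HasDerivAt φ (φ' x) x) (hφ' : Continuous φ') :
    ∫ x in a..b, ((∫ t in a..x, f t : ℝ) : ℂ) * φ' x =
      (∫ t in a..b, f t : ℝ) * φ b - ∫ x in a..b, (f x : ℂ) * φ x := by
  have hφ_cont : Continuous φ := continuous_iff_continuousAt.2 fun x => (hφ x).continuousAt
  have hf_int : IntervalIntegrable (fun x => (f x : ℂ) * φ x) volume a b :=
    IntervalIntegrable.mul_continuousOn ⟨hf.1.ofReal, hf.2.ofReal⟩ hφ_cont.continuousOn
  have hF : ContinuousOn (fun x => ∫ t in a..x, f t) (uIcc a b) :=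
    continuousOn_primitive_interval' hf left_mem_uIcc
  have hF_int : IntervalIntegrable (fun x => ((∫ t in a..x, f t : ℝ) : ℂ) * φ' x) volume a b :=
    ((Complex.continuous_ofReal.comp_continuousOn hF).mul hφ'.continuousOn).intervalIntegrable
  have component (L : ℂ →L[ℝ] ℝ) (hL : ∀ (r : ℝ) (z : ℂ), L (r * z) = r * L z) :
      L (∫ x in a..b, ((∫ t in a..x, f t : ℝ) : ℂ) * φ' x) =
        L ((∫ t in a..b, f t : ℝ) * φ b - ∫ x in a..b, (f x : ℂ) * φ x) := by
    rw [map_sub, ← L.intervalIntegral_comp_comm hF_int, ← L.intervalIntegral_comp_comm hf_int]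
    simp only [hL]
    exact integral_primitive_mul_deriv hf (fun x => L.hasFDerivAt.comp_hasDerivAt x (hφ x))
      (L.continuous.comp hφ')
  exact Complex.ext (component Complex.reCLM fun r z => Complex.re_ofReal_mul r z)
    (component Complex.imCLM fun r z => Complex.im_ofReal_mul r z)

end IntegrationByParts

/-! ### Chebyshev nodes and the perfect spline of order zero -/

section Nodes

variable {s i : ℕ}

/-- The `j`-th extremal point `-cos (jπ/s)` of the Chebyshev polynomial `T_s`, counted from the
left; `chebyshevKnot s 1, …, chebyshevKnot s (s - 1)` are the sign changes of `U_{s-1}`. -/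
noncomputable def chebyshevKnot (s j : ℕ) : ℝ := -node s j

lemma chebyshevKnot_eq_neg_cos (s j : ℕ) : chebyshevKnot s j = -Real.cos (j * (π / s)) := by
  rw [chebyshevKnot, node, mul_div_assoc]

lemma chebyshevKnot_zero (s : ℕ) : chebyshevKnot s 0 = -1 := by
  rw [chebyshevKnot, node_eq_one]

lemma chebyshevKnot_self (hs : s ≠ 0) : chebyshevKnot s s = 1 := by
  rw [chebyshevKnot, node_eq_neg_one hs, neg_neg]

lemma chebyshevKnot_mem_Icc (s j : ℕ) : chebyshevKnot s j ∈ Icc (-1 : ℝ) 1 :=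
  neg_mem_Icc_iff.2 (by rw [neg_neg]; exact node_mem_Icc)

lemma chebyshevKnot_lt_succ (hi : i < s) : chebyshevKnot s i < chebyshevKnot s (i + 1) :=
  neg_lt_neg (node_lt hi (Nat.lt_succ_self i))

lemma exists_mem_Icc_chebyshevKnot (hs : s ≠ 0) {x : ℝ} (hx : x ∈ Icc (-1 : ℝ) 1) :
    ∃ i < s, x ∈ Icc (chebyshevKnot s i) (chebyshevKnot s (i + 1)) := by
  have hex : ∃ j, x ≤ chebyshevKnot s (j + 1) :=
    ⟨s - 1, by rw [Nat.sub_add_cancel (Nat.pos_of_ne_zero hs), chebyshevKnot_self hs]; exact hx.2⟩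
  classical
  obtain ⟨j, hj, hmin⟩ : ∃ j, x ≤ chebyshevKnot s (j + 1) ∧
      ∀ i < j, chebyshevKnot s (i + 1) < x :=
    ⟨Nat.find hex, Nat.find_spec hex, fun i hi => not_le.1 (Nat.find_min hex hi)⟩
  refine ⟨j, ?_, ?_, hj⟩
  · by_contra! hle
    have hlt := hmin (s - 1) (by omega)
    rw [Nat.sub_add_cancel (Nat.pos_of_ne_zero hs), chebyshevKnot_self hs] at hlt
    exact hlt.not_ge hx.2
  · cases j with
    | zero => exact (chebyshevKnot_zero s).trans_le hx.1
    | succ j => exact (hmin j j.lt_succ_self).le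

lemma exists_angle_of_mem_Ioo_chebyshevKnot (hi : i < s) {x : ℝ}
    (hx : x ∈ Ioo (chebyshevKnot s i) (chebyshevKnot s (i + 1))) :
    ∃ θ ∈ Ioo (i * (π / s)) ((i + 1) * (π / s)), θ ∈ Ioo 0 π ∧ x = -Real.cos θ := by
  have hs : (0 : ℝ) < s := by exact_mod_cast i.zero_le.trans_lt hi
  have hi' : (i : ℝ) + 1 ≤ s := by exact_mod_cast hi
  have hright : (i + 1) * (π / s) ≤ π := by
    rw [← mul_div_assoc, div_le_iff₀ hs, mul_comm π]
    gcongr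
  have hleft : 0 ≤ i * (π / s) := by positivity
  have hstep : i * (π / s) ≤ (i + 1) * (π / s) := by gcongr; linarith
  have hcos : Real.cos (Real.arccos (-x)) = -x :=
    Real.cos_arccos (neg_le_neg (hx.2.le.trans (chebyshevKnot_mem_Icc s _).2))
      (neg_le.1 ((chebyshevKnot_mem_Icc s _).1.trans hx.1.le))
  have hmem : Real.arccos (-x) ∈ Icc 0 π := ⟨Real.arccos_nonneg _, Real.arccos_le_pi _⟩
  have hx_left := hx.1
  have hx_right := hx.2
  rw [chebyshevKnot_eq_neg_cos, neg_lt, ← hcos] at hx_left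
  rw [chebyshevKnot_eq_neg_cos, lt_neg, ← hcos, Nat.cast_succ] at hx_right
  have hlt_left := (Real.strictAntiOn_cos.lt_iff_gt hmem ⟨hleft, hstep.trans hright⟩).1 hx_left
  have hlt_right := (Real.strictAntiOn_cos.lt_iff_gt ⟨hleft.trans hstep, hright⟩ hmem).1 hx_right
  exact ⟨_, ⟨hlt_left, hlt_right⟩, ⟨hleft.trans_lt hlt_left, hlt_right.trans_le hright⟩,
    by rw [hcos, neg_neg]⟩

end Nodes

section SplineZero

lemma sign_neg_one_pow_mul (n : ℕ) {c : ℝ} (hc : 0 < c) :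
    Real.sign ((-1) ^ n * c) = (-1) ^ n := by
  rcases neg_one_pow_eq_or ℝ n with h | h
  · rw [h, one_mul, Real.sign_of_pos hc]
  · rw [h, neg_one_mul, Real.sign_neg, Real.sign_of_pos hc]

lemma fspline_zero (s : ℕ) (x : ℝ) :
    fspline s 0 x = (-1) ^ (s - 1) * Real.sign ((U ℝ ((s : ℤ) - 1)).eval x) := rfl

lemma fspline_zero_eq_neg_one_pow {s i : ℕ} (hi : i < s) {x : ℝ}
    (hx : x ∈ Ioo (chebyshevKnot s i) (chebyshevKnot s (i + 1))) :
    fspline s 0 x = (-1) ^ i := by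
  obtain ⟨θ, ⟨hlt_left, hlt_right⟩, hθ, rfl⟩ := exists_angle_of_mem_Ioo_chebyshevKnot hi hx
  obtain ⟨n, rfl⟩ : ∃ n, s = n + 1 := ⟨s - 1, by omega⟩
  have hn : (0 : ℝ) < (n + 1 : ℕ) := by positivity
  rw [← mul_div_assoc, div_lt_iff₀ hn] at hlt_left
  rw [← mul_div_assoc, lt_div_iff₀ hn] at hlt_right
  push_cast at hlt_left hlt_right
  have hsin : 0 < Real.sin θ := Real.sin_pos_of_mem_Ioo hθ
  have hphase : 0 < Real.sin ((n + 1) * θ - i * π) :=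
    Real.sin_pos_of_mem_Ioo ⟨by linarith, by linarith⟩
  have hU : (U ℝ n).eval (-Real.cos θ) =
      (-1) ^ (n + i) * (Real.sin ((n + 1) * θ - i * π) / Real.sin θ) := by
    have hU_cos := U_real_cos θ n
    have hshift := Real.sin_add_nat_mul_pi ((n + 1) * θ - i * π) i
    rw [sub_add_cancel] at hshift
    rw [Int.cast_natCast, hshift] at hU_cos
    rw [U_eval_neg, Int.cast_negOnePow_natCast, pow_add, mul_assoc, ← mul_div_assoc, ← hU_cos,
      mul_div_cancel_right₀ _ hsin.ne']
  rw [fspline_zero, Nat.cast_succ, add_sub_cancel_right, Nat.add_sub_cancel, hU,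
    sign_neg_one_pow_mul _ (div_pos hphase hsin), pow_add, ← mul_assoc, ← mul_pow, neg_one_mul,
    neg_neg, one_pow, one_mul]

lemma abs_fspline_zero_le_one (s : ℕ) (x : ℝ) : |fspline s 0 x| ≤ 1 := by
  rw [fspline_zero, abs_mul, abs_neg_one_pow, one_mul]
  rcases Real.sign_apply_eq ((U ℝ ((s : ℤ) - 1)).eval x) with h | h | h <;> simp [h]

lemma measurable_real_sign : Measurable Real.sign :=
  Measurable.ite measurableSet_Iio measurable_const
    (Measurable.ite measurableSet_Ioi measurable_const measurable_const)

lemma measurable_fspline_zero (s : ℕ) : Measurable (fspline s 0) :=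
  (measurable_real_sign.comp (Polynomial.continuous _).measurable).const_mul _

end SplineZero

/-! ### The spline chain -/

section SplineChain

lemma fspline_succ (s k : ℕ) (x : ℝ) :
    fspline s (k + 1) x = ∫ t in (-1 : ℝ)..x, fspline s k t := rfl

lemma fspline_succ_neg_one (s k : ℕ) : fspline s (k + 1) (-1) = 0 := integral_same

lemma intervalIntegrable_fspline (s k : ℕ) (a b : ℝ) :
    IntervalIntegrable (fspline s k) volume a b := by
  induction k generalizing a b with
  | zero =>
    refine (intervalIntegrable_const (c := (1 : ℝ))).mono_fun
      (measurable_fspline_zero s).aestronglyMeasurable (ae_of_all _ fun x => ?_)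
    rw [norm_one]
    exact abs_fspline_zero_le_one s x
  | succ k ih => exact (continuous_primitive ih (-1)).intervalIntegrable a b

lemma continuous_fspline_succ (s k : ℕ) : Continuous (fspline s (k + 1)) :=
  continuous_primitive (intervalIntegrable_fspline s k) (-1)

lemma fspline_succ_sub (s k : ℕ) (a b : ℝ) :
    fspline s (k + 1) b - fspline s (k + 1) a = ∫ x in a..b, fspline s k x :=
  integral_interval_sub_left (intervalIntegrable_fspline s k _ _)
    (intervalIntegrable_fspline s k _ _)

end SplineChain

section SplineZeroIntegrals

variable {s i : ℕ} {E : Type*} [NormedAddCommGroup E] [NormedSpace ℝ E] [CompleteSpace E]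
  {φ φ' : ℝ → E}

lemma integral_fspline_zero_smul_deriv_of_subset (hi : i < s)
    (hφ : ∀ x, HasDerivAt φ (φ' x) x) (hφ' : Continuous φ') {a b : ℝ}
    (ha : chebyshevKnot s i ≤ a) (hab : a ≤ b) (hb : b ≤ chebyshevKnot s (i + 1)) :
    ∫ x in a..b, fspline s 0 x • φ' x = (-1 : ℝ) ^ i • (φ b - φ a) := by
  rw [← integral_eq_sub_of_hasDerivAt (fun x _ => hφ x) (hφ'.intervalIntegrable a b),
    ← intervalIntegral.integral_smul, integral_of_le hab, integral_of_le hab,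
    integral_Ioc_eq_integral_Ioo, integral_Ioc_eq_integral_Ioo]
  refine setIntegral_congr_fun measurableSet_Ioo fun x hx => ?_
  rw [fspline_zero_eq_neg_one_pow hi ⟨ha.trans_lt hx.1, hx.2.trans_le hb⟩]

lemma integral_fspline_zero_smul_deriv {j : ℕ} (hj : j ≤ s)
    (hφ : ∀ x, HasDerivAt φ (φ' x) x) (hφ' : Continuous φ') :
    ∫ x in (-1 : ℝ)..chebyshevKnot s j, fspline s 0 x • φ' x =
      ∑ i ∈ Finset.range j,
        (-1 : ℝ) ^ i • (φ (chebyshevKnot s (i + 1)) - φ (chebyshevKnot s i)) := by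
  have hint (a b : ℝ) : IntervalIntegrable (fun x => fspline s 0 x • φ' x) volume a b :=
    (intervalIntegrable_fspline s 0 a b).smul_continuousOn hφ'.continuousOn
  have hsum := sum_integral_adjacent_intervals fun i (_ : i < j) =>
    hint (chebyshevKnot s i) (chebyshevKnot s (i + 1))
  rw [← chebyshevKnot_zero s, ← hsum, chebyshevKnot_zero]
  exact Finset.sum_congr rfl fun i hi =>
    have hi : i < s := (Finset.mem_range.1 hi).trans_le hj
    integral_fspline_zero_smul_deriv_of_subset hi hφ hφ' le_rfl (chebyshevKnot_lt_succ hi).le le_rfl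

end SplineZeroIntegrals

/-! ### Sup-norm bounds for the first two integrals -/

lemma sum_neg_one_pow_mul_cos_sub_cos {α : ℝ} (hα : Real.cos (α / 2) ≠ 0) (j : ℕ) :
    ∑ i ∈ Finset.range j, (-1 : ℝ) ^ i * (Real.cos (i * α) - Real.cos ((i + 1) * α)) =
      -(Real.tan (α / 2) * ((-1) ^ j * Real.sin (j * α))) := by
  have half_angle (i : ℕ) : Real.cos (i * α) - Real.cos ((i + 1) * α) =
      Real.tan (α / 2) * (Real.sin (i * α) + Real.sin ((i + 1) * α)) := by
    have hdiff : (i * α - (i + 1) * α) / 2 = -(α / 2) := by ring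
    rw [Real.cos_sub_cos, Real.sin_add_sin, hdiff, Real.sin_neg, Real.cos_neg,
      ← Real.tan_mul_cos hα]
    ring
  induction j with
  | zero => simp
  | succ j ih =>
    rw [Finset.sum_range_succ, ih, half_angle, pow_succ, Nat.cast_succ]
    ring

section SupNorm

variable {s i j : ℕ}

lemma cos_natCast_mul_pi_div_half_pos (hj : j < s) : 0 < Real.cos (j * (π / s) / 2) := by
  have hs : (0 : ℝ) < s := by exact_mod_cast j.zero_le.trans_lt hj
  have hlt : j * (π / s) < π := by
    rw [← mul_div_assoc, div_lt_iff₀ hs, mul_comm π]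
    gcongr
  have hnonneg : 0 ≤ j * (π / s) := by positivity
  exact Real.cos_pos_of_mem_Ioo ⟨by linarith [Real.pi_pos], by linarith⟩

lemma tan_pi_div_half_nonneg (hs : s ≠ 0) : 0 ≤ Real.tan (π / s / 2) := by
  have hs' : (1 : ℝ) ≤ s := by exact_mod_cast Nat.one_le_iff_ne_zero.2 hs
  refine Real.tan_nonneg_of_nonneg_of_le_pi_div_two (by positivity) ?_
  gcongr
  exact div_le_self Real.pi_pos.le hs'

lemma fspline_one_chebyshevKnot (hs : 2 ≤ s) (hj : j ≤ s) :
    fspline s 1 (chebyshevKnot s j) =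
      -(Real.tan (π / s / 2) * ((-1) ^ j * Real.sin (j * (π / s)))) := by
  have hcos : Real.cos (π / s / 2) ≠ 0 := by
    simpa using (cos_natCast_mul_pi_div_half_pos (j := 1) hs).ne'
  have hsum := integral_fspline_zero_smul_deriv hj hasDerivAt_id (continuous_const (y := (1 : ℝ)))
  simp only [smul_eq_mul, mul_one] at hsum
  rw [fspline_succ, hsum, ← sum_neg_one_pow_mul_cos_sub_cos hcos]
  refine Finset.sum_congr rfl fun i _ => ?_
  simp only [id_eq, chebyshevKnot_eq_neg_cos]
  push_cast
  ring

lemma fspline_one_eq_of_mem_segment (hi : i < s) {x : ℝ}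
    (hx : x ∈ Icc (chebyshevKnot s i) (chebyshevKnot s (i + 1))) :
    fspline s 1 x = fspline s 1 (chebyshevKnot s i) + (-1) ^ i * (x - chebyshevKnot s i) := by
  have hseg := integral_fspline_zero_smul_deriv_of_subset hi hasDerivAt_id
    (continuous_const (y := (1 : ℝ))) le_rfl hx.1 hx.2
  simp only [smul_eq_mul, mul_one, id_eq] at hseg
  rw [← hseg, ← fspline_succ_sub, add_sub_cancel]

lemma abs_fspline_one_chebyshevKnot_le (hs : 2 ≤ s) (hj : j ≤ s) :
    |fspline s 1 (chebyshevKnot s j)| ≤ Real.tan (π / s / 2) := by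
  have htan := tan_pi_div_half_nonneg (s := s) (by omega)
  rw [fspline_one_chebyshevKnot hs hj, abs_neg, abs_mul, abs_mul, abs_neg_one_pow, one_mul,
    abs_of_nonneg htan]
  exact mul_le_of_le_one_right htan (Real.abs_sin_le_one _)

lemma abs_fspline_one_le (hs : 2 ≤ s) {x : ℝ} (hx : x ∈ Icc (-1 : ℝ) 1) :
    |fspline s 1 x| ≤ Real.tan (π / s / 2) := by
  obtain ⟨i, hi, hxi⟩ := exists_mem_Icc_chebyshevKnot (s := s) (by omega) hx
  have hleft := abs_le.1 (abs_fspline_one_chebyshevKnot_le hs hi.le)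
  have hright := abs_le.1 (abs_fspline_one_chebyshevKnot_le hs (Nat.succ_le_of_lt hi))
  rw [fspline_one_eq_of_mem_segment hi ⟨(chebyshevKnot_lt_succ hi).le, le_rfl⟩] at hright
  rw [fspline_one_eq_of_mem_segment hi hxi, abs_le]
  rcases neg_one_pow_eq_or ℝ i with h | h <;> rw [h] at hright ⊢ <;> constructor <;>
    linarith [hxi.1, hxi.2]

lemma fspline_two_eq_of_mem_segment (hi : i < s) {x : ℝ}
    (hx : x ∈ Icc (chebyshevKnot s i) (chebyshevKnot s (i + 1))) :
    fspline s 2 x = fspline s 2 (chebyshevKnot s i) +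
      (-1) ^ i * (fspline s 1 x ^ 2 - fspline s 1 (chebyshevKnot s i) ^ 2) / 2 := by
  set a := chebyshevKnot s i
  set c := fspline s 1 a
  set ε : ℝ := (-1) ^ i
  have hε : ε * ε = 1 := by rw [← mul_pow, neg_one_mul, neg_neg, one_pow]
  have haffine : EqOn (fspline s 1) (fun y => c + ε * (y - a)) (uIcc a x) := fun y hy => by
    rw [uIcc_of_le hx.1] at hy
    exact fspline_one_eq_of_mem_segment hi ⟨hy.1, hy.2.trans hx.2⟩
  have hderiv (y : ℝ) :
      HasDerivAt (fun y => ε * (c + ε * (y - a)) ^ 2 / 2) (c + ε * (y - a)) y := by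
    have hlin : HasDerivAt (fun y => c + ε * (y - a)) ε y := by
      simpa using (((hasDerivAt_id y).sub_const a).const_mul ε).const_add c
    refine (((hlin.pow 2).const_mul ε).div_const 2).congr_deriv ?_
    linear_combination (c + ε * (y - a)) * hε
  rw [← sub_eq_iff_eq_add', fspline_succ_sub, integral_congr haffine,
    integral_eq_sub_of_hasDerivAt (fun y _ => hderiv y)
      (Continuous.intervalIntegrable (by fun_prop) _ _), haffine right_mem_uIcc, sub_self, mul_zero,
    add_zero]
  ring

lemma fspline_two_chebyshevKnot (hs : 3 ≤ s) (hj : j ≤ s) :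
    fspline s 2 (chebyshevKnot s j) = -(Real.tan (π / s / 2) ^ 2 / 4 *
      (Real.tan (π / s) * ((-1) ^ j * Real.sin (j * (2 * (π / s)))))) := by
  have hcos : Real.cos (2 * (π / s) / 2) ≠ 0 := by
    simpa using (cos_natCast_mul_pi_div_half_pos (j := 2) hs).ne'
  have htele := sum_neg_one_pow_mul_cos_sub_cos hcos j
  rw [mul_div_cancel_left₀ _ two_ne_zero] at htele
  rw [← mul_neg, ← htele]
  clear htele
  induction j with
  | zero => simp [chebyshevKnot_zero, fspline_succ_neg_one]
  | succ j ih =>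
    have hcos_sq (r : ℝ) : Real.cos (r * (2 * (π / s))) = 1 - 2 * Real.sin (r * (π / s)) ^ 2 := by
      rw [mul_left_comm, Real.cos_two_mul, Real.cos_sq']
      ring
    have hsq (k : ℕ) (r : ℝ) : ((-1) ^ k * r) ^ 2 = r ^ 2 := by
      rw [mul_pow, ← pow_mul, mul_comm k, pow_mul, neg_one_sq, one_pow, one_mul]
    rw [fspline_two_eq_of_mem_segment hj ⟨(chebyshevKnot_lt_succ hj).le, le_rfl⟩, ih (by omega),
      Finset.sum_range_succ, fspline_one_chebyshevKnot (by omega) hj,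
      fspline_one_chebyshevKnot (by omega) (by omega), hcos_sq, hcos_sq, neg_sq, neg_sq,
      mul_left_comm, hsq, mul_left_comm, hsq, Nat.cast_succ]
    ring

lemma tan_pi_div_mem_Icc (hs : 4 ≤ s) : Real.tan (π / s) ∈ Icc (0 : ℝ) 1 := by
  have hs' : (4 : ℝ) ≤ s := by exact_mod_cast hs
  have hle : π / s ≤ π / 4 := by gcongr
  have hpos : 0 < π / s := by positivity
  refine ⟨Real.tan_nonneg_of_nonneg_of_le_pi_div_two hpos.le (by linarith), ?_⟩
  rw [← Real.tan_pi_div_four]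
  exact Real.strictMonoOn_tan.monotoneOn ⟨by linarith, by linarith⟩ ⟨by linarith, by linarith⟩ hle

lemma abs_fspline_two_le (hs : 4 ≤ s) {x : ℝ} (hx : x ∈ Icc (-1 : ℝ) 1) :
    |fspline s 2 x| ≤ 3 / 4 * Real.tan (π / s / 2) ^ 2 := by
  obtain ⟨i, hi, hxi⟩ := exists_mem_Icc_chebyshevKnot (s := s) (by omega) hx
  have hknot : |fspline s 2 (chebyshevKnot s i)| ≤ Real.tan (π / s / 2) ^ 2 / 4 := by
    have htan := tan_pi_div_mem_Icc hs
    rw [fspline_two_chebyshevKnot (by omega) hi.le, abs_neg, abs_mul, abs_mul, abs_mul,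
      abs_neg_one_pow, one_mul, abs_of_nonneg htan.1, abs_of_nonneg (by positivity)]
    exact mul_le_of_le_one_right (by positivity)
      (mul_le_one₀ htan.2 (abs_nonneg _) (Real.abs_sin_le_one _))
  have hsq {y : ℝ} (hy : y ∈ Icc (-1 : ℝ) 1) : fspline s 1 y ^ 2 ≤ Real.tan (π / s / 2) ^ 2 :=
    have hle := abs_le.1 (abs_fspline_one_le (by omega) hy)
    sq_le_sq' hle.1 hle.2
  have hincrement : |(-1) ^ i * (fspline s 1 x ^ 2 - fspline s 1 (chebyshevKnot s i) ^ 2) / 2| ≤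
      Real.tan (π / s / 2) ^ 2 / 2 := by
    rw [abs_div, abs_mul, abs_neg_one_pow, one_mul, abs_two]
    gcongr
    exact abs_sub_le_of_nonneg_of_le (sq_nonneg _) (hsq hx) (sq_nonneg _)
      (hsq (chebyshevKnot_mem_Icc s i))
  rw [fspline_two_eq_of_mem_segment hi hxi]
  refine (abs_add_le _ _).trans ?_
  linarith

lemma natCast_mul_tan_pi_div_half_le (hs : 4 ≤ s) : s * Real.tan (π / s / 2) ≤ 1.71 := by
  have hs' : (4 : ℝ) ≤ s := by exact_mod_cast hs
  have hpi := Real.pi_lt_d4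
  set δ := π / s / 2 with hδ
  have hδ_pos : 0 < δ := by positivity
  have hmul : s * δ = π / 2 := by rw [hδ]; field_simp
  have hcos : 0.9228 ≤ Real.cos δ := by
    have hδ_le : δ ≤ 0.3927 := by nlinarith
    nlinarith [Real.one_sub_sq_div_two_le_cos (x := δ)]
  rw [Real.tan_eq_sin_div_cos, ← mul_div_assoc, div_le_iff₀ (by linarith)]
  calc s * Real.sin δ ≤ s * δ := by gcongr; exact (Real.sin_lt hδ_pos).le
    _ ≤ 1.71 * Real.cos δ := by linarith

end SupNorm

/-! ### Orthogonality to polynomials and moments -/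

section Moments

open Polynomial (derivative)
open scoped Polynomial

variable {s : ℕ}

lemma eval_T_chebyshevKnot (s n i : ℕ) :
    (T ℝ n).eval (chebyshevKnot s i) = (-1) ^ n * Real.cos (i * (n * (π / s))) := by
  rw [chebyshevKnot_eq_neg_cos, T_eval_neg, T_real_cos, Int.cast_negOnePow_natCast,
    Int.cast_natCast, mul_left_comm]

lemma succ_mul_integral_fspline_zero_mul_U (hs : s ≠ 0) (n : ℕ) :
    (n + 1) * ∫ x in (-1 : ℝ)..1, fspline s 0 x * (U ℝ n).eval x =
      (-1) ^ n * ∑ i ∈ Finset.range s, (-1 : ℝ) ^ i * (Real.cos (i * ((n + 1 : ℕ) * (π / s))) -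
        Real.cos ((i + 1) * ((n + 1 : ℕ) * (π / s)))) := by
  have hderiv (x : ℝ) : HasDerivAt (fun x => (T ℝ (n + 1 : ℕ)).eval x)
      ((n + 1) * (U ℝ n).eval x) x := by
    have h := (T ℝ (n + 1 : ℕ)).hasDerivAt x
    rw [T_derivative_eq_U] at h
    simpa using h
  have hsum := integral_fspline_zero_smul_deriv (le_refl s) hderiv (by fun_prop)
  rw [chebyshevKnot_self hs] at hsum
  simp only [smul_eq_mul, eval_T_chebyshevKnot, mul_left_comm (fspline s 0 _)] at hsum
  rw [← intervalIntegral.integral_const_mul, hsum, Finset.mul_sum]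
  refine Finset.sum_congr rfl fun i _ => ?_
  push_cast
  ring

lemma integral_fspline_zero_mul_U_eq_zero {n : ℕ} (hn : n + 1 < s) :
    ∫ x in (-1 : ℝ)..1, fspline s 0 x * (U ℝ n).eval x = 0 := by
  have hs : (s : ℝ) ≠ 0 := by exact_mod_cast (by omega : s ≠ 0)
  have h := succ_mul_integral_fspline_zero_mul_U (s := s) (by omega) n
  rw [sum_neg_one_pow_mul_cos_sub_cos (cos_natCast_mul_pi_div_half_pos hn).ne',
    mul_left_comm (s : ℝ), mul_div_cancel₀ _ hs,
    Real.sin_nat_mul_pi, mul_zero, mul_zero, neg_zero, mul_zero] at h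
  exact (mul_eq_zero.1 h).resolve_left n.cast_add_one_ne_zero

lemma integral_fspline_zero_mul_U_pred (n : ℕ) :
    ∫ x in (-1 : ℝ)..1, fspline (n + 1) 0 x * (U ℝ n).eval x = (-1) ^ n * 2 := by
  have h := succ_mul_integral_fspline_zero_mul_U n.succ_ne_zero n
  have hn : ((n + 1 : ℕ) : ℝ) ≠ 0 := by positivity
  have hterm (i : ℕ) : (-1 : ℝ) ^ i * (Real.cos (i * π) - Real.cos ((i + 1) * π)) = 2 := by
    rw [add_one_mul, Real.cos_add_pi, Real.cos_nat_mul_pi, sub_neg_eq_add, ← two_mul, mul_left_comm,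
      ← mul_pow, neg_one_mul, neg_neg, one_pow, mul_one]
  simp only [mul_div_cancel₀ _ hn, hterm, Finset.sum_const, Finset.card_range, nsmul_eq_mul] at h
  refine mul_left_cancel₀ hn ?_
  rw [Nat.cast_succ, h]
  push_cast
  ring

lemma intervalIntegrable_fspline_mul_eval (s k : ℕ) (p : ℝ[X]) (a b : ℝ) :
    IntervalIntegrable (fun x => fspline s k x * p.eval x) volume a b :=
  (intervalIntegrable_fspline s k a b).mul_continuousOn p.continuous.continuousOn

lemma degree_sub_C_mul_U_lt {p : ℝ[X]} {n : ℕ} (hp : p.degree < (n + 1 : ℕ)) :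
    (p - Polynomial.C (p.coeff n / 2 ^ n) * U ℝ n).degree < n := by
  have hU : (U ℝ n).coeff n = 2 ^ n := by
    rw [← leadingCoeff_U_natCast, Polynomial.leadingCoeff, natDegree_U_natCast]
  rw [Polynomial.degree_lt_iff_coeff_zero] at hp ⊢
  intro m hm
  rcases hm.eq_or_lt with rfl | hlt
  · rw [Polynomial.coeff_sub, Polynomial.coeff_C_mul, hU,
      div_mul_cancel₀ _ (by positivity), sub_self]
  · have hU_zero : (U ℝ n).coeff m = 0 :=
      Polynomial.coeff_eq_zero_of_natDegree_lt (by rwa [natDegree_U_natCast])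
    rw [Polynomial.coeff_sub, Polynomial.coeff_C_mul, hp m hlt, hU_zero, mul_zero, sub_zero]

lemma integral_fspline_zero_mul_eval_reduce (s n : ℕ) (p : ℝ[X]) :
    ∫ x in (-1 : ℝ)..1, fspline s 0 x * p.eval x =
      (∫ x in (-1 : ℝ)..1, fspline s 0 x *
        (p - Polynomial.C (p.coeff n / 2 ^ n) * U ℝ n).eval x) +
      p.coeff n / 2 ^ n * ∫ x in (-1 : ℝ)..1, fspline s 0 x * (U ℝ n).eval x := by
  rw [← intervalIntegral.integral_const_mul, ← intervalIntegral.integral_add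
    (intervalIntegrable_fspline_mul_eval s 0 _ _ _)
    ((intervalIntegrable_fspline_mul_eval s 0 _ _ _).const_mul _)]
  congr 1
  ext x
  rw [Polynomial.eval_sub, Polynomial.eval_mul, Polynomial.eval_C]
  ring

lemma integral_fspline_zero_mul_eval_eq_zero {n : ℕ} (hn : n < s) {p : ℝ[X]} (hp : p.degree < n) :
    ∫ x in (-1 : ℝ)..1, fspline s 0 x * p.eval x = 0 := by
  induction n generalizing p with
  | zero =>
    have hp_zero : p = 0 := Polynomial.degree_eq_bot.1 (Nat.WithBot.lt_zero_iff.1 hp)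
    simp [hp_zero]
  | succ n ih =>
    rw [integral_fspline_zero_mul_eval_reduce s n, ih (by omega) (degree_sub_C_mul_U_lt hp),
      integral_fspline_zero_mul_U_eq_zero hn, mul_zero, add_zero]

lemma integral_fspline_zero_mul_pow_pred (n : ℕ) :
    ∫ x in (-1 : ℝ)..1, fspline (n + 1) 0 x * x ^ n = (-1) ^ n * (2 / 2 ^ n) := by
  have hdeg : (Polynomial.X ^ n : ℝ[X]).degree < (n + 1 : ℕ) := by
    rw [Polynomial.degree_X_pow]
    exact_mod_cast n.lt_succ_self
  have h := integral_fspline_zero_mul_eval_reduce (n + 1) n (Polynomial.X ^ n)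
  rw [integral_fspline_zero_mul_eval_eq_zero n.lt_succ_self (degree_sub_C_mul_U_lt hdeg),
    integral_fspline_zero_mul_U_pred, Polynomial.coeff_X_pow_self] at h
  simp only [Polynomial.eval_pow, Polynomial.eval_X] at h
  rw [h]
  ring

lemma integral_fspline_mul_iterate_derivative {k : ℕ} (hvanish : ∀ i < k, fspline s (i + 1) 1 = 0)
    (p : ℝ[X]) :
    ∫ x in (-1 : ℝ)..1, fspline s k x * (derivative^[k] p).eval x =
      (-1) ^ k * ∫ x in (-1 : ℝ)..1, fspline s 0 x * p.eval x := by
  induction k with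
  | zero => simp
  | succ k ih =>
    have hparts := integral_primitive_mul_deriv (intervalIntegrable_fspline s k (-1) 1)
      (fun x => (derivative^[k] p).hasDerivAt x) (Polynomial.continuous _)
    simp only [← fspline_succ, hvanish k k.lt_succ_self, zero_mul, zero_sub,
      ih fun i hi => hvanish i (hi.trans k.lt_succ_self)] at hparts
    rw [Function.iterate_succ_apply', hparts, pow_succ]
    ring

lemma fspline_succ_one {k : ℕ} (hk : k + 1 < s) : fspline s (k + 1) 1 = 0 := by
  induction k using Nat.strong_induction_on with
  | _ k ih =>
    have hmoment := integral_fspline_mul_iterate_derivative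
      (fun i hi => ih i hi (by omega)) (Polynomial.X ^ k)
    have hdeg : (Polynomial.X ^ k : ℝ[X]).degree < (k + 1 : ℕ) := by
      rw [Polynomial.degree_X_pow]
      exact_mod_cast k.lt_succ_self
    rw [integral_fspline_zero_mul_eval_eq_zero hk hdeg, mul_zero,
      Polynomial.iterate_derivative_X_pow_eq_natCast_mul] at hmoment
    simp only [Nat.descFactorial_self, Nat.sub_self, pow_zero, mul_one, Polynomial.eval_natCast,
      intervalIntegral.integral_mul_const, ← fspline_succ] at hmoment
    exact (mul_eq_zero.1 hmoment).resolve_right (by positivity)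

lemma integral_fspline_pred (hs : s ≠ 0) :
    ∫ x in (-1 : ℝ)..1, fspline s (s - 1) x = 2 / (2 ^ (s - 1) * (s - 1).factorial) := by
  obtain ⟨n, rfl⟩ := Nat.exists_eq_succ_of_ne_zero hs
  have hmoment := integral_fspline_mul_iterate_derivative (s := n + 1) (k := n)
    (fun i hi => fspline_succ_one (by omega)) (Polynomial.X ^ n)
  simp only [Polynomial.iterate_derivative_X_pow_eq_natCast_mul, Nat.descFactorial_self,
    Nat.sub_self, pow_zero, mul_one, Polynomial.eval_natCast, intervalIntegral.integral_mul_const,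
    Polynomial.eval_pow, Polynomial.eval_X, integral_fspline_zero_mul_pow_pred] at hmoment
  rw [Nat.succ_sub_one, ← div_div, eq_div_iff (by positivity), hmoment, ← mul_assoc, ← mul_pow,
    neg_one_mul, neg_neg, one_pow, one_mul]

end Moments

/-! ### Decay of the oscillatory moments -/

section OscillatoryMoments

/-- The oscillatory moment `∫_{-1}^{1} f(x) x^m e^{iωx} dx`; for `f` supported in `[-1, 1]` it is,
up to normalization, the `m`-th derivative of the Fourier transform of `f`. -/
noncomputable def oscMoment (f : ℝ → ℝ) (m : ℕ) (ω : ℝ) : ℂ :=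
  ∫ x in (-1 : ℝ)..1, (f x : ℂ) * ((x : ℂ) ^ m * Complex.exp (ω * x * Complex.I))

variable {f : ℝ → ℝ} (m : ℕ) (ω : ℝ)

lemma norm_pow_mul_exp_mul_I (x : ℝ) :
    ‖(x : ℂ) ^ m * Complex.exp (ω * x * Complex.I)‖ = |x| ^ m := by
  rw [norm_mul, norm_pow, Complex.norm_real, Real.norm_eq_abs, ← Complex.ofReal_mul,
    Complex.norm_exp_ofReal_mul_I, mul_one]

lemma hasDerivAt_pow_mul_exp_mul_I (x : ℝ) :
    HasDerivAt (fun x : ℝ => (x : ℂ) ^ m * Complex.exp (ω * x * Complex.I))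
      (m * ((x : ℂ) ^ (m - 1) * Complex.exp (ω * x * Complex.I)) +
        ω * Complex.I * ((x : ℂ) ^ m * Complex.exp (ω * x * Complex.I))) x := by
  have hid : HasDerivAt (fun x : ℝ => (x : ℂ)) 1 x := (hasDerivAt_id x).ofReal_comp
  refine ((hid.pow m).mul ((hid.const_mul (ω : ℂ)).mul_const Complex.I).cexp).congr_deriv ?_
  simp only [Pi.pow_apply]
  ring

lemma integral_mul_deriv_pow_mul_exp (hf : IntervalIntegrable f volume (-1) 1) :
    ∫ x in (-1 : ℝ)..1, (f x : ℂ) * (m * ((x : ℂ) ^ (m - 1) * Complex.exp (ω * x * Complex.I)) +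
        ω * Complex.I * ((x : ℂ) ^ m * Complex.exp (ω * x * Complex.I))) =
      m * oscMoment f (m - 1) ω + ω * Complex.I * oscMoment f m ω := by
  have hint (n : ℕ) : IntervalIntegrable (fun x : ℝ =>
      (f x : ℂ) * ((x : ℂ) ^ n * Complex.exp (ω * x * Complex.I))) volume (-1) 1 :=
    IntervalIntegrable.mul_continuousOn ⟨hf.1.ofReal, hf.2.ofReal⟩ (by fun_prop)
  rw [oscMoment, oscMoment, ← intervalIntegral.integral_const_mul,
    ← intervalIntegral.integral_const_mul,
    ← intervalIntegral.integral_add ((hint _).const_mul _) ((hint _).const_mul _)]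
  congr 1
  ext x
  ring

lemma abs_mul_norm_oscMoment_le (hf : IntervalIntegrable f volume (-1) 1) :
    |ω| * ‖oscMoment f m ω‖ ≤
      ‖∫ x in (-1 : ℝ)..1, (f x : ℂ) *
        (m * ((x : ℂ) ^ (m - 1) * Complex.exp (ω * x * Complex.I)) +
          ω * Complex.I * ((x : ℂ) ^ m * Complex.exp (ω * x * Complex.I)))‖ +
      m * ‖oscMoment f (m - 1) ω‖ := by
  rw [integral_mul_deriv_pow_mul_exp m ω hf]
  calc |ω| * ‖oscMoment f m ω‖ = ‖ω * Complex.I * oscMoment f m ω‖ := by simp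
    _ = ‖(m * oscMoment f (m - 1) ω + ω * Complex.I * oscMoment f m ω) -
          m * oscMoment f (m - 1) ω‖ := by rw [add_sub_cancel_left]
    _ ≤ _ := (norm_sub_le _ _).trans_eq (by rw [norm_mul, Complex.norm_natCast])

lemma abs_mul_norm_oscMoment_primitive_le (hf : IntervalIntegrable f volume (-1) 1)
    (hzero : ∫ t in (-1 : ℝ)..1, f t = 0) :
    |ω| * ‖oscMoment (fun x => ∫ t in (-1 : ℝ)..x, f t) m ω‖ ≤
      ‖oscMoment f m ω‖ + m * ‖oscMoment (fun x => ∫ t in (-1 : ℝ)..x, f t) (m - 1) ω‖ := by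
  have hprimitive : IntervalIntegrable (fun x => ∫ t in (-1 : ℝ)..x, f t) volume (-1) 1 :=
    (continuousOn_primitive_interval' hf left_mem_uIcc).intervalIntegrable
  refine (abs_mul_norm_oscMoment_le m ω hprimitive).trans_eq ?_
  rw [integral_primitive_mul_deriv_complex hf (hasDerivAt_pow_mul_exp_mul_I m ω) (by fun_prop),
    hzero, Complex.ofReal_zero, zero_mul, zero_sub, norm_neg, ← oscMoment]

lemma integral_abs_pow : ∫ x in (-1 : ℝ)..1, |x| ^ m = 2 / (m + 1) := by
  have hint (a b : ℝ) : IntervalIntegrable (fun x => |x| ^ m) volume a b :=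
    Continuous.intervalIntegrable (by fun_prop) a b
  have hright : ∫ x in (0 : ℝ)..1, |x| ^ m = 1 / (m + 1) := by
    have habs : EqOn (fun x : ℝ => |x| ^ m) (fun x => x ^ m) (uIcc 0 1) := fun x hx => by
      rw [uIcc_of_le zero_le_one] at hx
      simp only [abs_of_nonneg hx.1]
    rw [integral_congr habs, integral_pow, one_pow, zero_pow m.succ_ne_zero, sub_zero]
  have hleft : ∫ x in (-1 : ℝ)..0, |x| ^ m = ∫ x in (0 : ℝ)..1, |x| ^ m := by
    simpa using integral_comp_neg (fun x : ℝ => |x| ^ m) (a := -1) (b := 0)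
  rw [← integral_add_adjacent_intervals (hint _ 0) (hint _ _), hleft, hright]
  ring

lemma norm_oscMoment_le {B : ℝ} (hB : ∀ x ∈ Icc (-1 : ℝ) 1, |f x| ≤ B) :
    ‖oscMoment f m ω‖ ≤ B * (2 / (m + 1)) := by
  rw [oscMoment, ← integral_abs_pow, ← intervalIntegral.integral_const_mul]
  refine intervalIntegral.norm_integral_le_of_norm_le (by norm_num) (ae_of_all _ fun x hx => ?_)
    (Continuous.intervalIntegrable (by fun_prop) _ _)
  rw [norm_mul, norm_pow_mul_exp_mul_I, Complex.norm_real]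
  gcongr
  exact hB x ⟨hx.1.le, hx.2⟩

lemma abs_mul_norm_oscMoment_fspline_zero_le {s : ℕ} (hs : s ≠ 0) :
    |ω| * ‖oscMoment (fspline s 0) m ω‖ ≤
      2 * s + m * ‖oscMoment (fspline s 0) (m - 1) ω‖ := by
  refine (abs_mul_norm_oscMoment_le m ω (intervalIntegrable_fspline s 0 _ _)).trans ?_
  gcongr
  have hsum := integral_fspline_zero_smul_deriv (le_refl s) (hasDerivAt_pow_mul_exp_mul_I m ω)
    (by fun_prop)
  rw [chebyshevKnot_self hs] at hsum
  simp only [Complex.real_smul] at hsum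
  have hknot (i : ℕ) : ‖(chebyshevKnot s i : ℂ) ^ m *
      Complex.exp (ω * chebyshevKnot s i * Complex.I)‖ ≤ 1 := by
    rw [norm_pow_mul_exp_mul_I]
    exact pow_le_one₀ (abs_nonneg _) (abs_le.2 (chebyshevKnot_mem_Icc s i))
  rw [hsum]
  calc _ ≤ ∑ _i ∈ Finset.range s, (2 : ℝ) := norm_sum_le_of_le _ fun i _ => ?_
    _ = 2 * s := by rw [Finset.sum_const, Finset.card_range, nsmul_eq_mul, mul_comm]
  rw [norm_mul, Complex.norm_real, norm_pow, norm_neg, norm_one, one_pow, one_mul]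
  exact (norm_sub_le _ _).trans (by linarith [hknot i, hknot (i + 1)])

end OscillatoryMoments

/-- Unfolding the recursion `a E(m, k+1) ≤ E(m, k) + m E(m-1, k+1)` down to level `r`: a path that
decreases `m` exactly `j` times ends at `E(m-j, r+j)`, and there are `k.choose j` such paths. -/
lemma pow_mul_le_sum_of_recursion {a : ℝ} (ha : 0 ≤ a) {E : ℕ → ℕ → ℝ} {K : ℕ}
    (hE : ∀ m, ∀ k < K, a * E m (k + 1) ≤ E m k + m * E (m - 1) (k + 1)) (m : ℕ) {k r : ℕ}
    (hk : k + r ≤ K) :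
    a ^ k * E m (k + r) ≤
      ∑ j ∈ Finset.range (m + 1), m.descFactorial j * k.choose j * E (m - j) (r + j) := by
  induction k generalizing r with
  | zero => simp [Finset.sum_range_succ']
  | succ k ih =>
    have hterm (j : ℕ) : a * (m.descFactorial j * k.choose j * E (m - j) (r + 1 + j)) ≤
        m.descFactorial j * k.choose j * E (m - j) (r + j) +
          m.descFactorial (j + 1) * k.choose j * E (m - (j + 1)) (r + (j + 1)) := by
      rcases lt_or_ge k j with hkj | hjk
      · simp [Nat.choose_eq_zero_of_lt hkj]
      · have hstep := mul_le_mul_of_nonneg_left (hE (m - j) (r + j) (by omega))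
          (by positivity : (0 : ℝ) ≤ m.descFactorial j * k.choose j)
        rw [Nat.descFactorial_succ, Nat.cast_mul, ← Nat.sub_sub, ← add_assoc, add_right_comm r 1]
        linarith
    calc a ^ (k + 1) * E m (k + 1 + r) = a * (a ^ k * E m (k + (r + 1))) := by
          rw [pow_succ', mul_assoc, add_assoc, add_comm 1 r]
      _ ≤ a * ∑ j ∈ Finset.range (m + 1),
            m.descFactorial j * k.choose j * E (m - j) (r + 1 + j) := by
          gcongr
          exact ih (by omega)
      _ ≤ ∑ j ∈ Finset.range (m + 1), (m.descFactorial j * k.choose j * E (m - j) (r + j) +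
            m.descFactorial (j + 1) * k.choose j * E (m - (j + 1)) (r + (j + 1))) := by
          rw [Finset.mul_sum]
          exact Finset.sum_le_sum fun j _ => hterm j
      _ = ∑ j ∈ Finset.range (m + 1),
            m.descFactorial j * (k + 1).choose j * E (m - j) (r + j) := by
          rw [Finset.sum_add_distrib, Finset.sum_range_succ' (fun j => _ * _ * E (m - j) (r + j)),
            Finset.sum_range_succ' (fun j => _ * ((k + 1).choose j : ℝ) * _),
            Finset.sum_range_succ (fun j => _ * E (m - (j + 1)) _),
            Nat.descFactorial_of_lt m.lt_succ_self, Nat.cast_zero, zero_mul, zero_mul,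
            add_zero (∑ _ ∈ _, _), add_right_comm, ← Finset.sum_add_distrib]
          congr 1
          · refine Finset.sum_congr rfl fun j _ => ?_
            rw [Nat.choose_succ_succ]
            push_cast
            ring
          · simp only [Nat.choose_zero_right]

section SplineDecay

variable {s : ℕ}

/-- The factor in `c_{l,s} = 1.02 (s-1)! 2^s d_{l,s}` that depends on the order `l` of the
derivative. -/
noncomputable def decayConst : ℕ → ℕ → ℝ
  | 0, s => s
  | 1, s => 2 * s
  | 2, s => 4 * s + 1
  | _, s => 9 * s - 2

lemma cConst_eq_mul_decayConst (l s : ℕ) :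
    cConst l s = 1.02 * (s - 1).factorial * 2 ^ s * decayConst l s := by
  match l with
  | 0 | 1 | 2 | _ + 3 => rfl

lemma decayConst_nonneg (l : ℕ) (hs : s ≠ 0) : 0 ≤ decayConst l s := by
  have hs' : (1 : ℝ) ≤ s := Nat.one_le_cast.2 (Nat.one_le_iff_ne_zero.2 hs)
  match l with
  | 0 | 1 | 2 | _ + 3 => simp only [decayConst]; linarith

lemma pow_mul_norm_oscMoment_fspline_pred_le_sum (hs : s ≠ 0) (m : ℕ) (ω : ℝ) :
    |ω| ^ s * ‖oscMoment (fspline s (s - 1)) m ω‖ ≤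
      ∑ j ∈ Finset.range m, m.descFactorial (j + 1) * s.choose (j + 1) *
        ‖oscMoment (fspline s j) (m - (j + 1)) ω‖ + 2 * s := by
  let E : ℕ → ℕ → ℝ := fun m k => k.casesOn (2 * s) fun k => ‖oscMoment (fspline s k) m ω‖
  have hE : ∀ m, ∀ k < s, |ω| * E m (k + 1) ≤ E m k + m * E (m - 1) (k + 1) := by
    intro m k hk
    match k with
    | 0 => exact abs_mul_norm_oscMoment_fspline_zero_le m ω hs
    | k + 1 =>
      exact abs_mul_norm_oscMoment_primitive_le m ω (intervalIntegrable_fspline s k _ _)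
        (fspline_succ_one hk)
  obtain ⟨r, rfl⟩ := Nat.exists_eq_succ_of_ne_zero hs
  have hsum := pow_mul_le_sum_of_recursion (abs_nonneg ω) hE m (k := r + 1) (r := 0) le_rfl
  simpa [E, Finset.sum_range_succ'] using hsum

lemma choose_two_mul_tan_pi_div_half_le (hs : 4 ≤ s) :
    s.choose 2 * Real.tan (π / s / 2) ≤ s := by
  have hτ := tan_pi_div_half_nonneg (by omega : s ≠ 0)
  calc s.choose 2 * Real.tan (π / s / 2)
      ≤ (s : ℝ) ^ 2 / Nat.factorial 2 * Real.tan (π / s / 2) := by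
        gcongr
        exact Nat.choose_le_pow_div 2 s
    _ = s * (s * Real.tan (π / s / 2)) / 2 := by
        rw [Nat.factorial_two, Nat.cast_two]
        ring
    _ ≤ s * 1.71 / 2 := by
        gcongr
        exact natCast_mul_tan_pi_div_half_le hs
    _ ≤ s := by linarith [(Nat.cast_nonneg s : (0 : ℝ) ≤ s)]

lemma choose_three_mul_tan_pi_div_half_sq_le (hs : 4 ≤ s) :
    s.choose 3 * (3 / 4 * Real.tan (π / s / 2) ^ 2) ≤ 3 / 8 * s := by
  have hτ := tan_pi_div_half_nonneg (by omega : s ≠ 0)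
  calc s.choose 3 * (3 / 4 * Real.tan (π / s / 2) ^ 2)
      ≤ (s : ℝ) ^ 3 / Nat.factorial 3 * (3 / 4 * Real.tan (π / s / 2) ^ 2) := by
        gcongr
        exact Nat.choose_le_pow_div 3 s
    _ = s * (s * Real.tan (π / s / 2)) ^ 2 / 8 := by
        rw [show Nat.factorial 3 = 6 from rfl]
        push_cast
        ring
    _ ≤ s * 1.71 ^ 2 / 8 := by
        gcongr
        exact natCast_mul_tan_pi_div_half_le hs
    _ ≤ 3 / 8 * s := by linarith [(Nat.cast_nonneg s : (0 : ℝ) ≤ s)]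

theorem pow_mul_norm_oscMoment_fspline_pred_le (hs : 4 ≤ s) {l : ℕ} (hl : l ≤ 3) (ω : ℝ) :
    |ω| ^ s * ‖oscMoment (fspline s (s - 1)) l ω‖ ≤ 2 * decayConst l s := by
  have hs' : (4 : ℝ) ≤ s := by exact_mod_cast hs
  have hweighted {j : ℕ} {B C : ℝ} (hB : ∀ x ∈ Icc (-1 : ℝ) 1, |fspline s j x| ≤ B)
      (hC : s.choose (j + 1) * B ≤ C) (m : ℕ) :
      s.choose (j + 1) * ‖oscMoment (fspline s j) m ω‖ ≤ C * (2 / (m + 1)) :=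
    calc s.choose (j + 1) * ‖oscMoment (fspline s j) m ω‖
        ≤ s.choose (j + 1) * (B * (2 / (m + 1))) := by
          gcongr
          exact norm_oscMoment_le m ω hB
      _ ≤ C * (2 / (m + 1)) := by
          rw [← mul_assoc]
          gcongr
  have hf₀ := hweighted (j := 0) (C := s) (fun x _ => abs_fspline_zero_le_one s x) (by simp)
  have hf₁ := hweighted (j := 1) (fun x hx => abs_fspline_one_le (by omega) hx)
    (choose_two_mul_tan_pi_div_half_le hs)
  have hf₂ := hweighted (j := 2) (fun x hx => abs_fspline_two_le hs hx)
    (choose_three_mul_tan_pi_div_half_sq_le hs)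
  refine (pow_mul_norm_oscMoment_fspline_pred_le_sum (by omega) l ω).trans ?_
  interval_cases l <;>
    norm_num [Finset.sum_range_succ, Nat.descFactorial, decayConst, mul_assoc,
      -Nat.choose_one_right] <;>
    linarith [hf₀ 0, hf₀ 1, hf₀ 2, hf₁ 0, hf₁ 1, hf₂ 0]

end SplineDecay

/-! ### Poisson summation for sampled functions -/

section Poisson

/-- The `l`-th derivative in `t`, up to the factor `i^l`, of the trigonometric polynomial whose
coefficients are the samples of `f` at the nodes `k / (N + 1)`, `|k| ≤ N`. -/
noncomputable def sampleSum (f : ℝ → ℝ) (N l : ℕ) (t : ℝ) : ℂ :=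
  ∑ k ∈ Finset.Icc (-(N : ℤ)) N,
    (f (k / (N + 1)) : ℂ) * ((k : ℂ) ^ l * Complex.exp (t * k * Complex.I))

/-- The compactly supported function whose sum over the integers is `sampleSum f N l t`. -/
noncomputable def sampleWave (f : ℝ → ℝ) (N l : ℕ) (t x : ℝ) : ℂ :=
  ((Icc (-1) 1).indicator f (x / (N + 1)) : ℝ) * ((x : ℂ) ^ l * Complex.exp (t * x * Complex.I))

variable {f : ℝ → ℝ} {N l : ℕ} {t : ℝ}

lemma sampleWave_eq_zero (hleft : f (-1) = 0) (hright : f 1 = 0) {x : ℝ}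
    (hx : (N : ℝ) + 1 ≤ |x|) : sampleWave f N l t x = 0 := by
  have hM : (0 : ℝ) < N + 1 := by positivity
  have hout : 1 ≤ |x / (N + 1)| := by rwa [abs_div, abs_of_pos hM, one_le_div hM]
  have hindicator : (Icc (-1) 1).indicator f (x / (N + 1)) = 0 := by
    refine indicator_apply_eq_zero.2 fun hmem => ?_
    rcases eq_or_eq_neg_of_abs_eq (le_antisymm (abs_le.2 hmem) hout) with h | h
    · rw [h, hright]
    · rw [h, hleft]
  rw [sampleWave, hindicator, Complex.ofReal_zero, zero_mul]

lemma continuous_sampleWave (hf : ContinuousOn f (Icc (-1) 1)) (hleft : f (-1) = 0)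
    (hright : f 1 = 0) : Continuous (sampleWave f N l t) := by
  have hindicator : Continuous ((Icc (-1 : ℝ) 1).indicator f) := by
    refine continuous_indicator ?_ (by rwa [closure_Icc])
    rw [frontier_Icc (by norm_num)]
    rintro x (rfl | rfl)
    exacts [hleft, hright]
  unfold sampleWave
  fun_prop

lemma tsum_sampleWave (hleft : f (-1) = 0) (hright : f 1 = 0) :
    ∑' n : ℤ, sampleWave f N l t n = sampleSum f N l t := by
  have hM : (0 : ℝ) < N + 1 := by positivity
  rw [tsum_eq_sum (s := Finset.Icc (-(N : ℤ)) N), sampleSum]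
  · refine Finset.sum_congr rfl fun k hk => ?_
    have hmem : (k : ℝ) / (N + 1) ∈ Icc (-1 : ℝ) 1 := by
      rw [mem_Icc, ← abs_le, abs_div, abs_of_pos hM, div_le_one hM]
      exact_mod_cast (abs_le.2 (Finset.mem_Icc.1 hk)).trans (by omega)
    rw [sampleWave, indicator_of_mem hmem, Complex.ofReal_intCast]
  · refine fun k hk => sampleWave_eq_zero hleft hright ?_
    rw [Finset.mem_Icc, ← abs_le, not_le] at hk
    exact_mod_cast hk

lemma fourier_sampleWave (hleft : f (-1) = 0) (hright : f 1 = 0) (n : ℤ) :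
    FourierTransform.fourier (sampleWave f N l t) (n : ℝ) =
      (N + 1) ^ (l + 1) * oscMoment f l ((N + 1) * (t - 2 * π * n)) := by
  set M : ℝ := N + 1 with hM
  have hMpos : 0 < M := by positivity
  have hcast : (N + 1 : ℂ) = M := by push_cast [hM]; rfl
  let integrand : ℝ → ℂ := fun x =>
    Complex.exp ((-2 * π * x * (n : ℝ) : ℝ) * Complex.I) • sampleWave f N l t x
  have hsupport : ∀ x ∉ Icc (-M) M, integrand x = 0 := fun x hx => by
    rw [mem_Icc, ← abs_le, not_le] at hx
    simp only [integrand, sampleWave_eq_zero hleft hright hx.le, smul_zero]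
  have hrescale : EqOn (fun x => integrand (M * x)) (fun x => M ^ l * ((f x : ℂ) *
      ((x : ℂ) ^ l * Complex.exp ((M * (t - 2 * π * n) : ℝ) * x * Complex.I)))) (uIcc (-1) 1) := by
    intro x hx
    rw [uIcc_of_le (by norm_num)] at hx
    have hexp : Complex.exp ((M * (t - 2 * π * n) : ℝ) * x * Complex.I) =
        Complex.exp ((-2 * π * (M * x) * (n : ℝ) : ℝ) * Complex.I) *
          Complex.exp (t * (M * x : ℝ) * Complex.I) := by
      rw [← Complex.exp_add]
      push_cast
      ring_nf
    simp only [integrand, sampleWave, smul_eq_mul]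
    rw [← hM, mul_div_cancel_left₀ _ hMpos.ne', indicator_of_mem hx, hexp]
    push_cast
    ring
  calc FourierTransform.fourier (sampleWave f N l t) (n : ℝ) = ∫ x, integrand x :=
        Real.fourier_real_eq_integral_exp_smul _ _
    _ = ∫ x in (M * -1)..(M * 1), integrand x := by
        rw [← setIntegral_eq_integral_of_forall_compl_eq_zero hsupport,
          integral_Icc_eq_integral_Ioc, ← integral_of_le (by linarith), mul_neg_one, mul_one]
    _ = M * ∫ x in (-1 : ℝ)..1, integrand (M * x) := by
        rw [← Complex.real_smul, intervalIntegral.smul_integral_comp_mul_left]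
    _ = _ := by
        rw [integral_congr hrescale, intervalIntegral.integral_const_mul, hcast, oscMoment]
        ring

theorem sampleSum_eq_tsum_oscMoment (hf : ContinuousOn f (Icc (-1) 1)) (hleft : f (-1) = 0)
    (hright : f 1 = 0)
    (hsum : Summable fun n : ℤ => oscMoment f l ((N + 1) * (t - 2 * π * n))) :
    sampleSum f N l t =
      (N + 1) ^ (l + 1) * ∑' n : ℤ, oscMoment f l ((N + 1) * (t - 2 * π * n)) := by
  have hdecay : sampleWave f N l t =O[Filter.cocompact ℝ] fun x : ℝ => |x| ^ (-2 : ℝ) := by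
    refine Asymptotics.IsBigO.of_bound 1 ?_
    filter_upwards [(isCompact_Icc (a := -((N : ℝ) + 1)) (b := N + 1)).compl_mem_cocompact]
      with x hx
    rw [mem_compl_iff, mem_Icc, ← abs_le, not_le] at hx
    rw [sampleWave_eq_zero hleft hright hx.le, norm_zero]
    positivity
  have hpoisson := Real.tsum_eq_tsum_fourier_of_rpow_decay_of_summable
    (continuous_sampleWave hf hleft hright) one_lt_two hdecay
    (by simpa only [fourier_sampleWave hleft hright] using hsum.mul_left _) 0
  rw [← tsum_sampleWave hleft hright, ← tsum_mul_left]
  simpa [fourier_sampleWave hleft hright] using hpoisson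

end Poisson

/-! ### Sample sums of functions with decaying oscillatory moments -/

section LatticeSums

/-- At `n = 0` the convention `1 / 0 = 0` makes the summand vanish. -/
lemma hasSum_int_one_div_pow_four : HasSum (fun n : ℤ => 1 / (n : ℝ) ^ 4) (π ^ 4 / 45) := by
  have hint := HasSum.of_nat_of_neg (f := fun n : ℤ => 1 / (n : ℝ) ^ 4)
    (by simpa using hasSum_zeta_four)
    (by simpa [Even.neg_pow (by decide : Even 4)] using hasSum_zeta_four)
  rwa [Int.cast_zero, zero_pow four_ne_zero, div_zero, sub_zero,
    show π ^ 4 / 90 + π ^ 4 / 90 = π ^ 4 / 45 by ring] at hint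

lemma hasSum_nat_one_div_two_mul_add_one_pow_four :
    HasSum (fun n : ℕ => 1 / (2 * (n : ℝ) + 1) ^ 4) (π ^ 4 / 96) := by
  have hinj : Function.Injective fun n : ℕ => 2 * n + 1 := fun m n h => by simpa using h
  have hodd : Summable fun n : ℕ => 1 / (2 * (n : ℝ) + 1) ^ 4 := by
    simpa [Function.comp_def] using hasSum_zeta_four.summable.comp_injective hinj
  have heven : HasSum (fun n : ℕ => 1 / (2 * (n : ℝ)) ^ 4) (1 / 16 * (π ^ 4 / 90)) := by
    refine (hasSum_zeta_four.mul_left (1 / 16)).congr_fun fun n => ?_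
    rw [mul_pow]
    ring
  have hsplit : HasSum (fun n : ℕ => 1 / (n : ℝ) ^ 4)
      (1 / 16 * (π ^ 4 / 90) + ∑' n : ℕ, 1 / (2 * (n : ℝ) + 1) ^ 4) :=
    HasSum.even_add_odd (by simpa using heven) (by simpa using hodd.hasSum)
  rw [show π ^ 4 / 96 = ∑' n : ℕ, 1 / (2 * (n : ℝ) + 1) ^ 4 by
    linarith [hasSum_zeta_four.unique hsplit]]
  exact hodd.hasSum

lemma hasSum_int_one_div_two_mul_add_one_pow_four :
    HasSum (fun n : ℤ => 1 / (2 * (n : ℝ) + 1) ^ 4) (π ^ 4 / 48) := by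
  have hnat := hasSum_nat_one_div_two_mul_add_one_pow_four
  have hneg : (fun n : ℕ => 1 / (2 * ((-(n + 1 : ℤ) : ℤ) : ℝ) + 1) ^ 4) =
      fun n : ℕ => 1 / (2 * (n : ℝ) + 1) ^ 4 := by
    ext n
    push_cast
    ring
  rw [show π ^ 4 / 48 = π ^ 4 / 96 + π ^ 4 / 96 by ring]
  exact HasSum.of_nat_of_neg_add_one (by simpa using hnat) (hneg ▸ hnat)

lemma mul_abs_two_mul_add_one_le {t : ℝ} (ht : t ≤ π) (n : ℤ) :
    t * |2 * (n : ℝ) + 1| ≤ |-t - 2 * π * n| := by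
  rcases le_or_gt 0 n with hn | hn
  · have hn' : (0 : ℝ) ≤ n := by exact_mod_cast hn
    rw [abs_of_nonneg (by linarith), ← abs_neg (-t - _)]
    refine le_trans ?_ (le_abs_self _)
    nlinarith
  · have hn' : (n : ℝ) ≤ -1 := by exact_mod_cast Int.le_sub_one_of_lt hn
    rw [abs_of_neg (by linarith)]
    refine le_trans ?_ (le_abs_self _)
    nlinarith

end LatticeSums

section SampleSumBounds

variable {f : ℝ → ℝ} {N l s : ℕ} {V t : ℝ}

lemma norm_sampleSum_neg (f : ℝ → ℝ) (N l : ℕ) (t : ℝ) :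
    ‖sampleSum f N l (-t)‖ = ‖sampleSum f N l t‖ := by
  rw [← Complex.norm_conj]
  simp [sampleSum, ← Complex.exp_conj]

lemma norm_natCast_add_one_pow (N m : ℕ) : ‖((N : ℂ) + 1) ^ m‖ = ((N : ℝ) + 1) ^ m := by
  rw [norm_pow, ← Nat.cast_add_one, Complex.norm_natCast, Nat.cast_add_one]

lemma norm_oscMoment_le_of_decay (hs : 4 ≤ s) (hV : ∀ ω, |ω| ^ s * ‖oscMoment f l ω‖ ≤ V)
    {ω c a : ℝ} (hc : 0 < c) (ha : 1 ≤ |a|) (hω : c * |a| ≤ |ω|) :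
    ‖oscMoment f l ω‖ ≤ V / c ^ s * (1 / a ^ 4) := by
  have hpow : c ^ s * a ^ 4 ≤ |ω| ^ s :=
    calc c ^ s * a ^ 4 = c ^ s * |a| ^ 4 := by rw [Even.pow_abs (by decide)]
      _ ≤ c ^ s * |a| ^ s := by gcongr
      _ ≤ |ω| ^ s := by rw [← mul_pow]; gcongr
  have ha₀ : 0 < a ^ 4 := Even.pow_pos (by decide) (abs_pos.1 (by linarith))
  rw [div_mul_div_comm, mul_one, le_div_iff₀ (by positivity), mul_comm]
  exact (mul_le_mul_of_nonneg_right hpow (norm_nonneg _)).trans (hV ω)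

theorem norm_sampleSum_le (hf : ContinuousOn f (Icc (-1) 1)) (hleft : f (-1) = 0)
    (hright : f 1 = 0) (hs : 4 ≤ s) (hV : ∀ ω, |ω| ^ s * ‖oscMoment f l ω‖ ≤ V)
    (ht : |t| ≤ π) (ht₀ : t ≠ 0) :
    ‖sampleSum f N l t‖ ≤ π ^ 4 / 48 * ((N + 1) ^ (l + 1) * (V / ((N + 1) * |t|) ^ s)) := by
  have hM : (0 : ℝ) < N + 1 := by positivity
  have hterm (n : ℤ) : ‖oscMoment f l ((N + 1) * (-|t| - 2 * π * n))‖ ≤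
      V / ((N + 1) * |t|) ^ s * (1 / (2 * n + 1) ^ 4) := by
    refine norm_oscMoment_le_of_decay hs hV (mul_pos hM (abs_pos.2 ht₀)) ?_ ?_
    · exact_mod_cast Int.one_le_abs (by omega : 2 * n + 1 ≠ 0)
    · rw [mul_assoc, abs_mul, abs_of_pos hM]
      gcongr
      exact mul_abs_two_mul_add_one_le ht n
  have hbound := hasSum_int_one_div_two_mul_add_one_pow_four.mul_left (V / ((N + 1) * |t|) ^ s)
  have hnorm : ‖sampleSum f N l t‖ = ‖sampleSum f N l (-|t|)‖ := by
    rcases abs_choice t with h | h <;> rw [h]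
    · rw [norm_sampleSum_neg]
    · rw [neg_neg]
  rw [hnorm, sampleSum_eq_tsum_oscMoment hf hleft hright (hbound.summable.of_norm_bounded hterm),
    norm_mul, norm_natCast_add_one_pow, mul_left_comm, mul_comm (π ^ 4 / 48)]
  gcongr
  exact tsum_of_norm_bounded hbound hterm

theorem norm_sampleSum_zero_sub_le (hf : ContinuousOn f (Icc (-1) 1)) (hleft : f (-1) = 0)
    (hright : f 1 = 0) (hs : 4 ≤ s) (hV : ∀ ω, |ω| ^ s * ‖oscMoment f l ω‖ ≤ V) :
    ‖sampleSum f N l 0 - (N + 1) ^ (l + 1) * oscMoment f l 0‖ ≤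
      π ^ 4 / 45 * ((N + 1) ^ (l + 1) * (V / ((N + 1) * (2 * π)) ^ s)) := by
  have hM : (0 : ℝ) < N + 1 := by positivity
  let nonzeroMode : ℤ → ℂ := fun n =>
    oscMoment f l ((N + 1) * (0 - 2 * π * n)) - (Pi.single 0 (oscMoment f l 0) : ℤ → ℂ) n
  have hterm (n : ℤ) : ‖nonzeroMode n‖ ≤ V / ((N + 1) * (2 * π)) ^ s * (1 / (n : ℝ) ^ 4) := by
    rcases eq_or_ne n 0 with rfl | hn
    · simp [nonzeroMode]
    · simp only [nonzeroMode, Pi.single_eq_of_ne hn, sub_zero]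
      refine norm_oscMoment_le_of_decay hs hV (by positivity) ?_ ?_
      · exact_mod_cast Int.one_le_abs hn
      · rw [zero_sub, mul_neg, abs_neg, abs_mul, abs_of_pos hM, abs_mul,
          abs_of_pos Real.two_pi_pos, mul_assoc]
  have hbound := hasSum_int_one_div_pow_four.mul_left (V / ((N + 1) * (2 * π)) ^ s)
  have hmodes : HasSum (fun n : ℤ => oscMoment f l ((N + 1) * (0 - 2 * π * n)))
      (∑' n, nonzeroMode n + oscMoment f l 0) := by
    simpa [nonzeroMode] using (hbound.summable.of_norm_bounded hterm).hasSum.add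
      (hasSum_pi_single 0 (oscMoment f l 0))
  rw [sampleSum_eq_tsum_oscMoment hf hleft hright hmodes.summable, hmodes.tsum_eq, mul_add,
    add_sub_cancel_right, norm_mul, norm_natCast_add_one_pow, mul_left_comm,
    mul_comm (π ^ 4 / 45)]
  gcongr
  exact tsum_of_norm_bounded hbound hterm

end SampleSumBounds

/-! ### The trigonometric kernel -/

section Kernel

variable {s : ℕ}

lemma gtilde_node (s N : ℕ) (k : ℤ) :
    gtilde s (k / (2 * ((N : ℝ) + 1))) = fspline s (s - 1) (k / (N + 1)) := by
  rw [gtilde]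
  congr 1
  field_simp

lemma sampleSum_fspline_zero_zero (s N : ℕ) :
    sampleSum (fspline s (s - 1)) N 0 0 = gnorm s N := by
  simp [sampleSum, gnorm, gtilde_node]

lemma hasDerivAt_sampleSum (f : ℝ → ℝ) (N l : ℕ) (t : ℝ) :
    HasDerivAt (sampleSum f N l) (Complex.I * sampleSum f N (l + 1) t) t := by
  unfold sampleSum
  rw [Finset.mul_sum]
  refine HasDerivAt.fun_sum fun k _ => ?_
  have hphase : HasDerivAt (fun t : ℝ => (t : ℂ) * k * Complex.I) (1 * k * Complex.I) t :=
    ((hasDerivAt_id t).ofReal_comp.mul_const (k : ℂ)).mul_const Complex.I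
  refine ((hphase.cexp.const_mul ((k : ℂ) ^ l)).const_mul (f (k / (N + 1)) : ℂ)).congr_deriv ?_
  ring

lemma iteratedDeriv_sigmaT (s N l : ℕ) :
    iteratedDeriv l (sigmaT s N) = fun t =>
      (1 / (gnorm s N : ℂ) * (Complex.I ^ l * sampleSum (fspline s (s - 1)) N l t)).re := by
  induction l with
  | zero =>
    ext t
    simp [sigmaT, sampleSum, gtilde_node, mul_comm (t : ℂ)]
  | succ l ih =>
    ext t
    have hderiv := ((hasDerivAt_sampleSum (fspline s (s - 1)) N l t).const_mul
      (Complex.I ^ l)).const_mul (1 / (gnorm s N : ℂ))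
    rw [iteratedDeriv_succ, ih, pow_succ, mul_assoc (Complex.I ^ l)]
    exact (Complex.reCLM.hasFDerivAt.comp_hasDerivAt t hderiv).deriv

lemma abs_iteratedDeriv_sigmaT_le {N : ℕ} (hgnorm : 0 ≤ gnorm s N) (l : ℕ) (t : ℝ) :
    |iteratedDeriv l (sigmaT s N) t| ≤ ‖sampleSum (fspline s (s - 1)) N l t‖ / gnorm s N := by
  rw [iteratedDeriv_sigmaT]
  refine (Complex.abs_re_le_norm _).trans_eq ?_
  rw [norm_mul, norm_mul, norm_pow, Complex.norm_I, one_pow, one_mul, norm_div, norm_one,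
    Complex.norm_real, Real.norm_of_nonneg hgnorm, one_div_mul_eq_div]

lemma continuousOn_fspline_pred (hs : 2 ≤ s) : ContinuousOn (fspline s (s - 1)) (Icc (-1) 1) := by
  obtain ⟨k, rfl⟩ := Nat.exists_eq_add_of_le' hs
  exact (continuous_fspline_succ _ k).continuousOn

lemma fspline_pred_neg_one (hs : 2 ≤ s) : fspline s (s - 1) (-1) = 0 := by
  obtain ⟨k, rfl⟩ := Nat.exists_eq_add_of_le' hs
  exact fspline_succ_neg_one _ k

lemma fspline_pred_one (hs : 2 ≤ s) : fspline s (s - 1) 1 = 0 := by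
  obtain ⟨k, rfl⟩ := Nat.exists_eq_add_of_le' hs
  exact fspline_succ_one (by omega)

lemma oscMoment_fspline_pred_zero_zero (hs : s ≠ 0) :
    oscMoment (fspline s (s - 1)) 0 0 = (2 / (2 ^ (s - 1) * (s - 1).factorial) : ℝ) := by
  rw [← integral_fspline_pred hs, ← intervalIntegral.integral_ofReal]
  simp [oscMoment]

lemma four_mul_factorial_le_pow (hs : 4 ≤ s) : 4 * s.factorial ≤ s ^ s := by
  have hfactor := Nat.factorial_mul_descFactorial (Nat.sub_le s 2)
  rw [Nat.sub_sub_self (by omega), Nat.factorial_two] at hfactor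
  calc 4 * s.factorial = 8 * s.descFactorial (s - 2) := by rw [← hfactor]; ring
    _ ≤ s ^ 2 * s ^ (s - 2) := by
        gcongr
        · nlinarith
        · exact Nat.descFactorial_le_pow s (s - 2)
    _ = s ^ s := by rw [← pow_add, Nat.add_sub_cancel' (by omega)]

lemma aliasing_error_le {N : ℕ} (hs : 4 ≤ s) (hN : s ≤ N + 1) :
    π ^ 4 / 45 * ((N + 1) * (2 * s / ((N + 1) * (2 * π)) ^ s)) ≤
      1 / 360 * ((N + 1) * (2 / (2 ^ (s - 1) * (s - 1).factorial))) := by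
  have hfactorial : 4 * (s * (s - 1).factorial) ≤ ((N : ℝ) + 1) ^ s := by
    have hnat : 4 * s.factorial ≤ (N + 1) ^ s :=
      (four_mul_factorial_le_pow hs).trans (Nat.pow_le_pow_left hN s)
    rw [← Nat.mul_factorial_pred (by omega)] at hnat
    exact_mod_cast hnat
  have hpi : π ^ 4 ≤ π ^ s := pow_le_pow_right₀ (by linarith [Real.pi_gt_three]) hs
  have htwo : (2 : ℝ) ^ s = 2 * 2 ^ (s - 1) := (mul_pow_sub_one (by omega) 2).symm
  have hratio : π ^ 4 * (4 * (s * (s - 1).factorial)) / (π ^ s * ((N : ℝ) + 1) ^ s) ≤ 1 :=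
    div_le_one_of_le₀ (mul_le_mul hpi hfactorial (by positivity) (by positivity)) (by positivity)
  calc _ = π ^ 4 * (4 * (s * (s - 1).factorial)) / (π ^ s * ((N : ℝ) + 1) ^ s) *
        (1 / 360 * ((N + 1) * (2 / (2 ^ (s - 1) * (s - 1).factorial)))) := by
        rw [mul_pow, mul_pow, htwo]
        field_simp
        norm_num
    _ ≤ _ := mul_le_of_le_one_left (by positivity) hratio

lemma abs_gnorm_sub_le {N : ℕ} (hs : 4 ≤ s) (hN : s ≤ N + 1) :
    |gnorm s N - (N + 1) * (2 / (2 ^ (s - 1) * (s - 1).factorial))| ≤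
      1 / 360 * ((N + 1) * (2 / (2 ^ (s - 1) * (s - 1).factorial))) := by
  have herror := norm_sampleSum_zero_sub_le (N := N) (l := 0) (continuousOn_fspline_pred (by omega))
    (fspline_pred_neg_one (by omega)) (fspline_pred_one (by omega)) hs
    (pow_mul_norm_oscMoment_fspline_pred_le hs (by omega))
  rw [sampleSum_fspline_zero_zero, oscMoment_fspline_pred_zero_zero (by omega), zero_add, pow_one,
    pow_one] at herror
  refine le_trans ?_ (aliasing_error_le hs hN)
  rw [← Real.norm_eq_abs, ← Complex.norm_real]
  push_cast at herror ⊢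
  exact herror

lemma le_gnorm {N : ℕ} (hs : 4 ≤ s) (hN : s ≤ N + 1) :
    359 / 360 * ((N + 1) * (2 / (2 ^ (s - 1) * (s - 1).factorial))) ≤ gnorm s N := by
  linarith [(abs_le.1 (abs_gnorm_sub_le hs hN)).1]

lemma pi_pow_four_div_mul_le : π ^ 4 / 96 * (360 / 359) ≤ 1.02 :=
  calc π ^ 4 / 96 * (360 / 359) ≤ 3.1416 ^ 4 / 96 * (360 / 359) := by
        gcongr
        exact Real.pi_lt_d4.le
    _ ≤ 1.02 := by norm_num

end Kernel

theorem localization_of_trigonometric_kernel_and_derivatives_general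
    (s N : ℕ) (hs : 4 ≤ s) (hN : s ≤ N + 1)
    (t : ℝ) (ht : t ∈ Set.Icc (-π) π) (ht0 : t ≠ 0)
    (l : ℕ) (hl : l ≤ 3) :
    |iteratedDeriv l (sigmaT s N) t| ≤ cConst l s / (((N : ℝ) + 1) ^ (s - l) * |t| ^ s) := by
  have hsum := norm_sampleSum_le (N := N) (l := l) (continuousOn_fspline_pred (by omega))
    (fspline_pred_neg_one (by omega)) (fspline_pred_one (by omega)) hs
    (pow_mul_norm_oscMoment_fspline_pred_le hs hl) (abs_le.2 ht) ht0
  have hgnorm := le_gnorm hs hN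
  have hgnorm_pos : 0 < gnorm s N := lt_of_lt_of_le (by positivity) hgnorm
  have hd := decayConst_nonneg l (by omega : s ≠ 0)
  calc |iteratedDeriv l (sigmaT s N) t|
      ≤ ‖sampleSum (fspline s (s - 1)) N l t‖ / gnorm s N :=
        abs_iteratedDeriv_sigmaT_le hgnorm_pos.le l t
    _ ≤ π ^ 4 / 48 * ((N + 1) ^ (l + 1) * (2 * decayConst l s / ((N + 1) * |t|) ^ s)) /
          (359 / 360 * ((N + 1) * (2 / (2 ^ (s - 1) * (s - 1).factorial)))) := by gcongr
    _ = π ^ 4 / 96 * (360 / 359) * ((s - 1).factorial * 2 ^ s * decayConst l s) /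
          ((N + 1) ^ (s - l) * |t| ^ s) := by
        rw [← mul_pow_sub_one (by omega : s ≠ 0) (2 : ℝ), mul_pow,
          ← pow_sub_mul_pow ((N : ℝ) + 1) (by omega : l ≤ s)]
        field_simp
        ring
    _ ≤ 1.02 * ((s - 1).factorial * 2 ^ s * decayConst l s) /
          ((N + 1) ^ (s - l) * |t| ^ s) := by
        gcongr
        exact pi_pow_four_div_mul_le
    _ = cConst l s / ((N + 1) ^ (s - l) * |t| ^ s) := by
        rw [cConst_eq_mul_decayConst]
        ring

theorem localization_of_trigonometric_kernel_and_derivatives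
    (s N : ℕ) (hs_even : Even s) (hs : 6 ≤ s) (hN : 2 * s ≤ N)
    (t : ℝ) (ht : t ∈ Set.Icc (-π) π) (ht0 : t ≠ 0)
    (l : ℕ) (hl : l ≤ 3) :
    |iteratedDeriv l (sigmaT s N) t| ≤ cConst l s / (((N : ℝ) + 1) ^ (s - l) * |t| ^ s) :=
  localization_of_trigonometric_kernel_and_derivatives_general s N (by omega) (by omega) t ht ht0 l
    hl
end

section
/- Let s be an even integer with s ≥ 8 and let N ≥ 2s. Then c_s(N+1)² ≤ |σ̃_N″(0)| ≤ c̃_s(N+1)² with c_s = 0.999/(2(s+1)) and c̃_s = 1.001/(2(s+1)); d_s(N+1)⁴ ≤ |σ̃_N^{(4)}(0)| ≤ d̃_s(N+1)⁴ with d_s = 3·0.999/(4(s+2)(s+1)) and d̃_s = 3·1.001/(4(s+2)(s+1)); and in the case s = 8, for all N ≥ 20, |σ̃_N^{(6)}(0)| ≤ 1.011·(15/8)·(8!/11!)·(N+1)⁶. -/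
open scoped Real

/-!
The moments of the sampled spline control the derivatives of the kernel:
`|σ̃^{(2p)}(0)| = ∑ k²ᵖ g̃(k / (2 (N + 1))) / ∑ g̃(k / (2 (N + 1)))`.

On `[-1, 1]` the perfect spline is an alternating sum of truncated powers at the Chebyshev nodes
`cos (π j / s)`, so each moment is an alternating sum over the nodes of sums
`∑_{k ≥ u} kᵐ (k - u)ˢ⁻¹`, with `u` the rescaled node. Bernoulli polynomials evaluate these in
closed form: an upper boundary term, a multiple of `u^{s + m}` and a Bernoulli remainder at
`⌈u⌉ - u`. Because the alternating power sums of the nodes vanish in all degrees below `s`, the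
upper boundary terms cancel; in degree `s + 2 p` the power sums are explicit and yield the limit
`s! (2p)! / (4ᵖ p! (s + p)!)` of the normalised moments. The remainders are `O(6⁻ˢ)` relative to
this, by the bound `|B_k| ≤ 4 k! / (2π)ᵏ` on `[0, 1]`.
-/

section

open Finset MeasureTheory Polynomial Polynomial.Chebyshev
open scoped Nat

/-! ### Truncated powers and the perfect spline -/

/-- The truncated power `y₊ⁿ`, with the convention `0₊⁰ = 0`. -/
noncomputable def truncPow (n : ℕ) (y : ℝ) : ℝ := if 0 < y then y ^ n else 0

lemma truncPow_of_pos {y : ℝ} (hy : 0 < y) (n : ℕ) : truncPow n y = y ^ n := if_pos hy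

lemma truncPow_of_nonpos {y : ℝ} (hy : y ≤ 0) (n : ℕ) : truncPow n y = 0 := if_neg hy.not_gt

lemma truncPow_of_nonneg {n : ℕ} (hn : n ≠ 0) {y : ℝ} (hy : 0 ≤ y) : truncPow n y = y ^ n := by
  rcases hy.eq_or_lt with rfl | hy
  · rw [truncPow_of_nonpos le_rfl, zero_pow hn]
  · exact truncPow_of_pos hy n

lemma truncPow_mul {c : ℝ} (hc : 0 < c) (n : ℕ) (y : ℝ) :
    truncPow n (c * y) = c ^ n * truncPow n y := by
  simp only [truncPow, mul_pos_iff_of_pos_left hc, mul_pow, mul_ite, mul_zero]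

lemma monotone_truncPow (n : ℕ) : Monotone (truncPow n) := by
  intro x y hxy
  rcases le_or_gt x 0 with hx | hx
  · rw [truncPow_of_nonpos hx, truncPow]
    split_ifs <;> positivity
  · rw [truncPow_of_pos hx, truncPow_of_pos (hx.trans_le hxy)]
    gcongr

lemma continuous_truncPow_succ (n : ℕ) : Continuous (truncPow (n + 1)) := by
  have h : truncPow (n + 1) = fun y ↦ max y 0 ^ (n + 1) := by
    ext y
    rcases le_or_gt y 0 with hy | hy
    · rw [truncPow_of_nonpos hy, max_eq_right hy, zero_pow n.succ_ne_zero]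
    · rw [truncPow_of_pos hy, max_eq_left hy.le]
  rw [h]
  fun_prop

lemma hasDerivAt_truncPow_succ (n : ℕ) {y : ℝ} (hy : y ≠ 0) :
    HasDerivAt (truncPow (n + 1)) ((n + 1) * truncPow n y) y := by
  rcases hy.lt_or_gt with hy | hy
  · rw [truncPow_of_nonpos hy.le, mul_zero]
    refine (hasDerivAt_const y 0).congr_of_eventuallyEq ?_
    filter_upwards [Iio_mem_nhds hy] with z hz using truncPow_of_nonpos (le_of_lt hz) _
  · rw [truncPow_of_pos hy]
    refine HasDerivAt.congr_of_eventuallyEq (by simpa using hasDerivAt_pow (n + 1) y) ?_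
    filter_upwards [Ioi_mem_nhds hy] with z hz using truncPow_of_pos hz _

lemma intervalIntegrable_truncPow_sub (n : ℕ) (c a b : ℝ) :
    IntervalIntegrable (fun t ↦ truncPow n (t - c)) volume a b :=
  ((monotone_truncPow n).comp fun _ _ h ↦ sub_le_sub_right h c).intervalIntegrable

lemma integral_truncPow_sub (n : ℕ) (c a b : ℝ) :
    ∫ t in a..b, truncPow n (t - c) =
      (truncPow (n + 1) (b - c) - truncPow (n + 1) (a - c)) / (n + 1) := by
  have hne : (n : ℝ) + 1 ≠ 0 := by positivity
  rw [eq_div_iff hne, mul_comm, ← intervalIntegral.integral_const_mul]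
  refine integral_eq_of_hasDerivAt_off_countable (fun t ↦ truncPow (n + 1) (t - c)) _
    (Set.countable_singleton c) ?_ ?_ ((intervalIntegrable_truncPow_sub n c a b).const_mul _)
  · exact ((continuous_truncPow_succ n).comp (continuous_id.sub continuous_const)).continuousOn
  · intro t ht
    exact (hasDerivAt_truncPow_succ n (sub_ne_zero.2 ht.2)).comp_sub_const t c

/-- The sum of the truncated powers `(x - c)₊ᵏ / k!` over the knots `c = cos (π j / s)`, `j < 2 s`,
with alternating signs: the explicit form of the perfect spline. Every knot except `1` and `-1`
occurs twice, for `j` and for `2 s - j`, so that the sum runs over a full period of the `2 s`-th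
roots of unity. -/
noncomputable def nodeSpline (s k : ℕ) (x : ℝ) : ℝ :=
  ∑ j ∈ range (2 * s), (-1) ^ (s + j) * truncPow k (x - node s j) / k !

lemma integral_nodeSpline (s k : ℕ) (x : ℝ) :
    ∫ t in (-1 : ℝ)..x, nodeSpline s k t = nodeSpline s (k + 1) x := by
  simp only [nodeSpline]
  rw [intervalIntegral.integral_finsetSum fun j _ ↦
    ((intervalIntegrable_truncPow_sub _ _ _ _).const_mul _).div_const _]
  refine sum_congr rfl fun j _ ↦ ?_
  have hnode : (-1 : ℝ) - node s j ≤ 0 := by linarith [(node_mem_Icc (n := s) (i := j)).1]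
  rw [intervalIntegral.integral_div, intervalIntegral.integral_const_mul, integral_truncPow_sub,
    truncPow_of_nonpos hnode, Nat.factorial_succ]
  push_cast
  field_simp
  ring

lemma node_two_mul_sub {s j : ℕ} (hs : s ≠ 0) (hj : j ≤ 2 * s) :
    node s (2 * s - j) = node s j := by
  have hsR : (s : ℝ) ≠ 0 := by exact_mod_cast hs
  have harg : ((2 * s - j : ℕ) : ℝ) * π / s = 2 * π - j * π / s := by
    push_cast [hj]
    field_simp
  rw [node, node, harg, Real.cos_two_pi_sub]

lemma abs_mul_node_le {M : ℝ} (hM : 0 ≤ M) (s j : ℕ) : |M * node s j| ≤ M := by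
  rw [abs_mul, abs_of_nonneg hM]
  exact mul_le_of_le_one_right hM (abs_le.2 node_mem_Icc)

lemma node_lt_iff_of_mem_Ioo {s a j : ℕ} {x : ℝ} (hx : x ∈ Set.Ioo (node s (a + 1)) (node s a))
    (ha : a < s) (hj : j ≤ 2 * s) : node s j < x ↔ j ∈ Ico (a + 1) (2 * s - a) := by
  have hanti : StrictAntiOn (node s) (range (s + 1)) := strictAntiOn_node s
  have half {i : ℕ} (hi : i ≤ s) : node s i < x ↔ a < i := by
    refine ⟨fun h ↦ ?_, fun h ↦ lt_of_le_of_lt ?_ hx.1⟩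
    · exact (hanti.lt_iff_gt (by simp; omega) (by simp; omega)).1 (h.trans hx.2)
    · exact (hanti.le_iff_ge (by simp; omega) (by simp; omega)).2 h
  rcases le_total j s with h | h
  · rw [half h, mem_Ico]
    omega
  · rw [← node_two_mul_sub (by omega) hj, half (by omega), mem_Ico]
    omega

lemma nodeSpline_zero_of_mem_Ioo {s a : ℕ} {x : ℝ} (hx : x ∈ Set.Ioo (node s (a + 1)) (node s a))
    (ha : a < s) : nodeSpline s 0 x = (-1) ^ (s + (a + 1)) := by
  have hlen : ¬ Even (2 * s - a - (a + 1)) := by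
    rw [Nat.not_even_iff]
    omega
  calc nodeSpline s 0 x
      = ∑ j ∈ range (2 * s), if j ∈ Ico (a + 1) (2 * s - a) then (-1 : ℝ) ^ (s + j) else 0 := by
        refine sum_congr rfl fun j hj ↦ ?_
        simp only [truncPow, sub_pos, node_lt_iff_of_mem_Ioo hx ha (mem_range.1 hj).le, pow_zero,
          Nat.factorial_zero, Nat.cast_one, div_one, mul_ite, mul_one, mul_zero]
    _ = ∑ j ∈ Ico (a + 1) (2 * s - a), (-1) ^ (s + j) := by
        rw [← sum_filter, filter_mem_eq_inter, inter_eq_right.2]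
        intro j hj
        rw [mem_Ico] at hj
        rw [mem_range]
        omega
    _ = (-1) ^ (s + (a + 1)) := by
        simp only [sum_Ico_eq_sum_range, ← add_assoc, pow_add _ (s + a + 1), ← mul_sum,
          neg_one_geom_sum, if_neg hlen, mul_one]

lemma sign_eval_U_of_mem_Ioo {s a : ℕ} {x : ℝ} (hx : x ∈ Set.Ioo (node s (a + 1)) (node s a))
    (ha : a < s) : Real.sign ((U ℝ ((s : ℤ) - 1)).eval x) = (-1) ^ a := by
  have hs : (0 : ℝ) < s := by exact_mod_cast a.zero_le.trans_lt ha
  have hangle {i : ℕ} (hi : i ≤ s) : (i * π / s : ℝ) ∈ Set.Icc 0 π :=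
    ⟨by positivity, by rw [div_le_iff₀ hs, mul_comm π]; gcongr⟩
  obtain ⟨θ, hθ, rfl⟩ : x ∈ Real.cos '' Set.Icc 0 π := by
    rw [Real.bijOn_cos.image_eq]
    exact ⟨node_mem_Icc.1.trans hx.1.le, hx.2.le.trans node_mem_Icc.2⟩
  have hθa : a * π < s * θ := by
    have := (Real.strictAntiOn_cos.lt_iff_gt hθ (hangle ha.le)).1 hx.2
    rwa [div_lt_iff₀' hs] at this
  have hθa' : s * θ < (a + 1) * π := by
    have := (Real.strictAntiOn_cos.lt_iff_gt (hangle ha) hθ).1 hx.1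
    rw [lt_div_iff₀' hs] at this
    exact_mod_cast this
  have hU : (U ℝ ((s : ℤ) - 1)).eval (Real.cos θ) * Real.sin θ = Real.sin (s * θ) := by
    rw [U_real_cos]
    push_cast
    rw [sub_add_cancel]
  have hpos : 0 < (-1) ^ a * (U ℝ ((s : ℤ) - 1)).eval (Real.cos θ) := by
    refine pos_of_mul_pos_left ?_ (Real.sin_nonneg_of_mem_Icc hθ)
    rw [mul_assoc, hU, ← Real.sin_sub_nat_mul_pi]
    apply Real.sin_pos_of_pos_of_lt_pi <;> linarith
  rcases neg_one_pow_eq_or ℝ a with h | h <;> rw [h] at hpos ⊢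
  · exact Real.sign_of_pos (by linarith)
  · exact Real.sign_of_neg (by linarith)

lemma exists_mem_Ioo_node {s : ℕ} (hs : s ≠ 0) {x : ℝ} (hx : x ∈ Set.Ioo (-1) 1)
    (hne : ∀ j ≤ s, x ≠ node s j) : ∃ a < s, x ∈ Set.Ioo (node s (a + 1)) (node s a) := by
  have hex : ∃ b, node s b < x := ⟨s, by rw [node_eq_neg_one hs]; exact hx.1⟩
  obtain ⟨a, ha⟩ : ∃ a, Nat.find hex = a + 1 :=
    Nat.exists_eq_succ_of_ne_zero fun h ↦
      (hx.2.trans_eq node_eq_one.symm).not_gt (h ▸ Nat.find_spec hex)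
  have has : a < s := by
    have := Nat.find_min' hex (m := s) (by rw [node_eq_neg_one hs]; exact hx.1)
    omega
  refine ⟨a, has, ha ▸ Nat.find_spec hex, lt_of_le_of_ne ?_ (hne a has.le)⟩
  exact not_lt.1 (Nat.find_min hex (by omega))

lemma fspline_zero_eq_nodeSpline {s : ℕ} (hs : s ≠ 0) {x : ℝ} (hx : x ∈ Set.Ioo (-1) 1)
    (hne : ∀ j ≤ s, x ≠ node s j) : fspline s 0 x = nodeSpline s 0 x := by
  obtain ⟨a, ha, hxa⟩ := exists_mem_Ioo_node hs hx hne
  obtain ⟨n, rfl⟩ := Nat.exists_eq_succ_of_ne_zero hs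
  simp only [fspline, sign_eval_U_of_mem_Ioo hxa ha, nodeSpline_zero_of_mem_Ioo hxa ha,
    Nat.succ_eq_add_one, Nat.add_sub_cancel]
  ring

lemma fspline_eq_nodeSpline {s : ℕ} (hs : s ≠ 0) (k : ℕ) {x : ℝ} (hx : x ∈ Set.Icc (-1) 1) :
    fspline s (k + 1) x = nodeSpline s (k + 1) x := by
  induction k generalizing x with
  | zero =>
    rw [fspline, ← integral_nodeSpline]
    refine intervalIntegral.integral_congr_ae ?_
    have hnull := (insert 1 ((range (s + 1)).image (node s))).countable_toSet.ae_notMem volume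
    filter_upwards [hnull] with t ht htx
    rw [Set.uIoc_of_le hx.1] at htx
    simp only [coe_insert, coe_image, Set.mem_insert_iff, Set.mem_image, mem_coe, not_or,
      not_exists, not_and, mem_range, Nat.lt_succ_iff] at ht
    exact fspline_zero_eq_nodeSpline hs ⟨htx.1, lt_of_le_of_ne (htx.2.trans hx.2) ht.1⟩
      fun j hj h ↦ ht.2 j hj h.symm
  | succ k ih =>
    rw [fspline, ← integral_nodeSpline]
    refine intervalIntegral.integral_congr fun t ht ↦ ih ?_
    rw [Set.uIcc_of_le hx.1] at ht
    exact ⟨ht.1, ht.2.trans hx.2⟩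

/-! ### Alternating power sums of the Chebyshev nodes -/

lemma sum_range_zpow_pow_of_isPrimitiveRoot {K : Type*} [Field K] {n : ℕ} {ζ : K}
    (hζ : IsPrimitiveRoot ζ n) (r : ℤ) :
    ∑ j ∈ range n, (ζ ^ r) ^ j = if (n : ℤ) ∣ r then (n : K) else 0 := by
  split_ifs with h
  · simp [(hζ.zpow_eq_one_iff_dvd r).2 h]
  · have hpow : (ζ ^ r) ^ n = 1 := by
      rw [← zpow_natCast, zpow_comm, zpow_natCast, hζ.pow_eq_one, one_zpow]
    rw [geom_sum_eq (mt (hζ.zpow_eq_one_iff_dvd r).1 h), hpow, sub_self, zero_div]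

lemma ofReal_node_eq {s : ℕ} (hs : s ≠ 0) (j : ℕ) :
    (node s j : ℂ) = 1 / 2 * (Complex.exp (2 * π * Complex.I / (2 * s : ℕ)) ^ (j : ℤ) +
      Complex.exp (2 * π * Complex.I / (2 * s : ℕ)) ^ (-(j : ℤ))) := by
  have hsC : (s : ℂ) ≠ 0 := by exact_mod_cast hs
  have harg : (j : ℂ) * (2 * π * Complex.I / (2 * s : ℕ)) = (j * π / s : ℝ) * Complex.I := by
    push_cast
    field_simp
  rw [zpow_neg, zpow_natCast, ← Complex.exp_nat_mul, ← Complex.exp_neg, harg, node,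
    Complex.ofReal_cos, Complex.cos, neg_mul]
  ring

lemma sum_alternating_node_pow {s : ℕ} (hs : s ≠ 0) (n : ℕ) :
    ((∑ j ∈ range (2 * s), (-1) ^ j * node s j ^ n : ℝ) : ℂ) =
      (1 / 2) ^ n * ∑ i ∈ range (n + 1), (n.choose i : ℂ) *
        if ((2 * s : ℕ) : ℤ) ∣ s + 2 * i - n then ((2 * s : ℕ) : ℂ) else 0 := by
  have hζ := Complex.isPrimitiveRoot_exp (2 * s) (by omega)
  have hnode := ofReal_node_eq hs
  simp only [← sum_range_zpow_pow_of_isPrimitiveRoot hζ]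
  set ζ := Complex.exp (2 * π * Complex.I / (2 * s : ℕ))
  have hζ0 : ζ ≠ 0 := Complex.exp_ne_zero _
  have hζs : ζ ^ (s : ℤ) = -1 := by
    rw [zpow_natCast]
    exact (hζ.pow (by omega) (mul_comm 2 s)).eq_neg_one_of_two_right
  push_cast
  simp only [hnode, mul_pow, add_pow, mul_sum]
  rw [sum_comm]
  refine sum_congr rfl fun i hi ↦ sum_congr rfl fun j _ ↦ ?_
  have hin : i ≤ n := Nat.lt_succ_iff.1 (mem_range.1 hi)
  have hterm : (ζ ^ ((s : ℤ) + 2 * i - n)) ^ j =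
      (-1) ^ j * ((ζ ^ (j : ℤ)) ^ i * (ζ ^ (-(j : ℤ))) ^ (n - i)) := by
    simp only [← hζs, ← zpow_natCast, ← zpow_mul, ← zpow_add₀ hζ0]
    push_cast [hin]
    ring_nf
  rw [hterm]
  ring

lemma sum_alternating_node_pow_of_lt {s n : ℕ} (hn : n < s) :
    ∑ j ∈ range (2 * s), (-1) ^ j * node s j ^ n = 0 := by
  apply Complex.ofReal_injective
  rw [sum_alternating_node_pow (by omega), sum_eq_zero, mul_zero, Complex.ofReal_zero]
  intro i hi
  rw [mem_range] at hi
  refine mul_eq_zero_of_right _ (if_neg fun hdvd ↦ ?_)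
  have := Int.eq_zero_of_dvd_of_nonneg_of_lt (by omega) (by omega) hdvd
  omega

lemma dvd_sub_iff_eq_or_eq_add {s p i : ℕ} (hp : p < s) (hi : i ≤ s + 2 * p) :
    ((2 * s : ℕ) : ℤ) ∣ s + 2 * i - (s + 2 * p : ℕ) ↔ i = p ∨ i = s + p := by
  constructor
  · rintro ⟨c, hc⟩
    push_cast at hc
    have hci : (i : ℤ) - p = s * c := by linarith
    have hc0 : -1 < c := by
      by_contra! h
      nlinarith
    have hc1 : c < 2 := by
      by_contra! h
      nlinarith
    obtain rfl | rfl : c = 0 ∨ c = 1 := by omega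
    all_goals omega
  · rintro (rfl | rfl)
    · exact ⟨0, by push_cast; ring⟩
    · exact ⟨1, by push_cast; ring⟩

lemma sum_alternating_node_pow_add_two_mul {s p : ℕ} (hp : p < s) :
    ∑ j ∈ range (2 * s), (-1) ^ j * node s j ^ (s + 2 * p) =
      (1 / 2) ^ (s + 2 * p) * (4 * s * (s + 2 * p).choose p) := by
  apply Complex.ofReal_injective
  rw [sum_alternating_node_pow (by omega), ← sum_subset (s₁ := {p, s + p})]
  · rw [sum_pair (by omega), if_pos ((dvd_sub_iff_eq_or_eq_add hp (by omega)).2 (.inl rfl)),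
      if_pos ((dvd_sub_iff_eq_or_eq_add hp (by omega)).2 (.inr rfl)),
      Nat.choose_symm_of_eq_add (show s + 2 * p = (s + p) + p by ring)]
    push_cast
    ring
  · intro i hi
    simp only [mem_insert, mem_singleton, mem_range] at hi ⊢
    omega
  · intro i hi hne
    rw [mem_range, Nat.lt_succ_iff] at hi
    rw [if_neg fun hdvd ↦ hne ?_, mul_zero]
    simpa using (dvd_sub_iff_eq_or_eq_add hp hi).1 hdvd

/-! ### Summation of polynomials by Bernoulli polynomials -/

lemma bernoulliFun_add_one (n : ℕ) (t : ℝ) :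
    bernoulliFun n (t + 1) = bernoulliFun n t + n * t ^ (n - 1) := by
  have h := congrArg (fun p ↦ (p.map (algebraMap ℚ ℝ)).eval t) (bernoulli_comp_one_add_X n)
  simp only [Polynomial.map_comp, Polynomial.map_add, Polynomial.map_one, map_X, eval_comp,
    eval_add, eval_one, eval_X] at h
  rw [bernoulliFun, bernoulliFun, add_comm t 1, h]
  simp

/-- Indefinite summation of polynomials, `X ^ k ↦ B_{k + 1}(X) / (k + 1)`: a linear right inverse
of the forward difference operator, normalised so that the image has mean zero on `[0, 1]`. -/
noncomputable def bernoulliSum : ℝ[X] →ₗ[ℝ] ℝ[X] :=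
  (basisMonomials ℝ).constr ℝ fun k ↦
    (1 / (k + 1) : ℝ) • (Polynomial.bernoulli (k + 1)).map (algebraMap ℚ ℝ)

lemma eval_bernoulliSum_X_pow (k : ℕ) (t : ℝ) :
    (bernoulliSum (X ^ k)).eval t = bernoulliFun (k + 1) t / (k + 1) := by
  have hX : (X ^ k : ℝ[X]) = basisMonomials ℝ k := by
    simp only [coe_basisMonomials, monomial_one_right_eq_X_pow]
  rw [hX, bernoulliSum, Module.Basis.constr_basis, eval_smul, bernoulliFun, smul_eq_mul,
    one_div_mul_eq_div]

lemma bernoulliSum_monomial (k : ℕ) (a : ℝ) :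
    bernoulliSum (monomial k a) = a • bernoulliSum (X ^ k) := by
  rw [← map_smul, ← smul_X_eq_monomial]

lemma eval_add_one_bernoulliSum (p : ℝ[X]) (t : ℝ) :
    (bernoulliSum p).eval (t + 1) = (bernoulliSum p).eval t + p.eval t := by
  induction p using Polynomial.induction_on' with
  | add p q hp hq =>
    simp only [map_add, eval_add, hp, hq]
    ring
  | monomial k a =>
    have hk : (k : ℝ) + 1 ≠ 0 := by positivity
    simp only [bernoulliSum_monomial, eval_smul, eval_bernoulliSum_X_pow, bernoulliFun_add_one,
      eval_monomial, smul_eq_mul, Nat.add_sub_cancel]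
    push_cast
    field_simp

lemma sum_Ico_eval_eq_bernoulliSum_sub (p : ℝ[X]) {a b : ℤ} (hab : a ≤ b) :
    ∑ k ∈ Ico a b, p.eval (k : ℝ) =
      (bernoulliSum p).eval (b : ℝ) - (bernoulliSum p).eval (a : ℝ) := by
  induction b, hab using Int.leInduction with
  | base => simp
  | succ b hab ih =>
    rw [← insert_Ico_right_eq_Ico_add_one hab, sum_insert (by simp), ih, Int.cast_add, Int.cast_one,
      eval_add_one_bernoulliSum]
    ring

lemma intervalIntegrable_eval (p : ℝ[X]) (a b : ℝ) :
    IntervalIntegrable (fun t ↦ p.eval t) volume a b := p.continuous.intervalIntegrable a b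

lemma integral_bernoulliSum (p : ℝ[X]) (u : ℝ) :
    ∫ t in u..u + 1, (bernoulliSum p).eval t = ∫ t in 0..u, p.eval t := by
  induction p using Polynomial.induction_on' with
  | add p q hp hq =>
    simp only [map_add, eval_add]
    rw [intervalIntegral.integral_add, intervalIntegral.integral_add, hp, hq] <;>
      exact intervalIntegrable_eval _ _ _
  | monomial k a =>
    have hB : ∫ t in u..u + 1, bernoulliFun (k + 1) t = u ^ (k + 1) := by
      rw [intervalIntegral.integral_eq_sub_of_hasDerivAt
        (fun t _ ↦ antideriv_bernoulliFun (k + 1) t) (intervalIntegrable_bernoulliFun _ _ _),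
        bernoulliFun_add_one, Nat.add_sub_cancel]
      push_cast
      field_simp
      ring
    simp only [bernoulliSum_monomial, eval_smul, eval_bernoulliSum_X_pow, smul_eq_mul,
      eval_monomial, intervalIntegral.integral_const_mul, intervalIntegral.integral_div, hB,
      integral_pow]
    simp

lemma eq_C_of_eval_add_one_eq {q : ℝ[X]} (hq : ∀ t : ℝ, q.eval (t + 1) = q.eval t) :
    q = C (q.eval 0) := by
  have hnat (n : ℕ) : q.eval (n : ℝ) = q.eval 0 := by
    induction n with
    | zero => rw [Nat.cast_zero]
    | succ n ih => rw [Nat.cast_succ, hq, ih]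
  refine eq_of_infinite_eval_eq _ _
    ((Set.infinite_range_of_injective (Nat.cast_injective (R := ℝ))).mono ?_)
  rintro _ ⟨n, rfl⟩
  simp only [Set.mem_ofPred_eq, hnat, eval_C]

lemma eval_add_bernoulliSum (p : ℝ[X]) (t u : ℝ) :
    (bernoulliSum p).eval (t + u) =
      (bernoulliSum (p.comp (X + C u))).eval t + ∫ x in 0..u, p.eval x := by
  set q : ℝ[X] := (bernoulliSum p).comp (X + C u) - bernoulliSum (p.comp (X + C u))
  have hq (x : ℝ) : q.eval x =
      (bernoulliSum p).eval (x + u) - (bernoulliSum (p.comp (X + C u))).eval x := by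
    simp [q]
  have hconst : q = C (q.eval 0) := by
    refine eq_C_of_eval_add_one_eq fun x ↦ ?_
    rw [hq, hq, add_right_comm, eval_add_one_bernoulliSum, eval_add_one_bernoulliSum, eval_comp]
    simp
  have hmean : q.eval 0 = ∫ x in 0..u, p.eval x := by
    calc q.eval 0 = ∫ x in (0 : ℝ)..1, q.eval x := by rw [hconst]; simp
      _ = (∫ x in (0 : ℝ)..1, (bernoulliSum p).eval (x + u)) -
          ∫ x in (0 : ℝ)..1, (bernoulliSum (p.comp (X + C u))).eval x := by
        simp only [hq]
        refine intervalIntegral.integral_sub ?_ (intervalIntegrable_eval _ _ _)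
        exact ((bernoulliSum p).continuous.comp (by fun_prop)).intervalIntegrable _ _
      _ = ∫ x in 0..u, p.eval x := by
        have h0 := integral_bernoulliSum (p.comp (X + C u)) 0
        rw [zero_add, intervalIntegral.integral_same] at h0
        rw [h0, sub_zero, ← integral_bernoulliSum, add_comm u 1,
          intervalIntegral.integral_comp_add_right (fun x ↦ (bernoulliSum p).eval x), zero_add]
  have ht : q.eval t = q.eval 0 := by rw [hconst]; simp
  rw [← hmean, ← ht, hq]
  ring

lemma integral_pow_mul_sub_pow (m n : ℕ) (u : ℝ) :
    ∫ x in 0..u, x ^ m * (x - u) ^ n = (-1) ^ n * m ! * n ! / (m + n + 1)! * u ^ (m + n + 1) := by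
  induction n generalizing m with
  | zero =>
    simp only [pow_zero, mul_one, integral_pow, add_zero, Nat.factorial_succ, Nat.factorial_zero]
    push_cast
    field_simp
    ring
  | succ n ih =>
    have hparts : (m + 1) * (∫ x in 0..u, x ^ m * (x - u) ^ (n + 1)) +
        (n + 1) * (∫ x in 0..u, x ^ (m + 1) * (x - u) ^ n) = 0 := by
      simp only [← intervalIntegral.integral_const_mul]
      rw [← intervalIntegral.integral_add (Continuous.intervalIntegrable (by fun_prop) _ _)
        (Continuous.intervalIntegrable (by fun_prop) _ _),
        intervalIntegral.integral_eq_sub_of_hasDerivAt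
          (f := fun x ↦ x ^ (m + 1) * (x - u) ^ (n + 1)) (fun x _ ↦ ?_)
          (Continuous.intervalIntegrable (by fun_prop) _ _)]
      · simp
      · refine ((hasDerivAt_pow (m + 1) x).fun_mul
          (((hasDerivAt_id' x).sub_const u).fun_pow (n + 1))).congr_deriv ?_
        push_cast
        ring
    have hm : (m : ℝ) + 1 ≠ 0 := by positivity
    rw [ih, show m + 1 + n + 1 = m + (n + 1) + 1 by ring, Nat.factorial_succ m] at hparts
    rw [← mul_right_inj' hm, eq_neg_of_add_eq_zero_left hparts, Nat.factorial_succ n]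
    push_cast
    ring

lemma abs_bernoulliFun_le {k : ℕ} (hk : 2 ≤ k) {x : ℝ} (hx : x ∈ Set.Icc 0 1) :
    |bernoulliFun k x| ≤ 4 * k ! / (2 * π) ^ k := by
  have hfourier (n : ℕ) : ‖(1 / (n : ℂ) ^ k * (fourier n (x : UnitAddCircle) +
      (-1) ^ k * fourier (-n) (x : UnitAddCircle)))‖ ≤ 2 * (1 / (n : ℝ) ^ 2) := by
    have hsum : ‖fourier n (x : UnitAddCircle) +
        (-1 : ℂ) ^ k * fourier (-n) (x : UnitAddCircle)‖ ≤ 2 := by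
      refine (norm_add_le _ _).trans_eq ?_
      simp only [norm_mul, norm_pow, norm_neg, norm_one, one_pow, fourier_apply, Circle.norm_coe]
      norm_num
    rcases n.eq_zero_or_pos with rfl | hn
    · simp [show k ≠ 0 by omega]
    · have hn1 : (1 : ℝ) ≤ n := by exact_mod_cast hn
      rw [norm_mul, norm_div, norm_one, norm_pow, Complex.norm_natCast, mul_comm]
      gcongr
  have hnorm := (hasSum_one_div_nat_pow_mul_fourier hk hx).norm_le_of_bounded
    (hasSum_zeta_two.mul_left 2) hfourier
  have hcoeff : ‖-(2 * π * Complex.I) ^ k / k ! * bernoulliFun k x‖ =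
      (2 * π) ^ k / k ! * |bernoulliFun k x| := by
    simp [abs_of_pos Real.pi_pos]
  have hzeta : 2 * (π ^ 2 / 6) ≤ 4 := by nlinarith [Real.pi_pos, Real.pi_lt_d2]
  rw [hcoeff] at hnorm
  calc |bernoulliFun k x| = k ! / (2 * π) ^ k * ((2 * π) ^ k / k ! * |bernoulliFun k x|) := by
        field_simp
    _ ≤ k ! / (2 * π) ^ k * 4 := by
        gcongr
        exact hnorm.trans hzeta
    _ = 4 * k ! / (2 * π) ^ k := by ring

lemma abs_eval_bernoulliSum_X_pow_le {k : ℕ} (hk : k ≠ 0) {x : ℝ} (hx : x ∈ Set.Icc 0 1) :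
    |(bernoulliSum (X ^ k)).eval x| ≤ 4 * k ! / (2 * π) ^ (k + 1) := by
  have hk' : (0 : ℝ) < k + 1 := by positivity
  rw [eval_bernoulliSum_X_pow, abs_div, abs_of_pos hk', div_le_iff₀ hk']
  refine (abs_bernoulliFun_le (by omega) hx).trans_eq ?_
  rw [Nat.factorial_succ]
  push_cast
  ring

lemma factorial_add_le (n : ℕ) {i m : ℕ} (hi : i ≤ m) : (n + i)! ≤ n ! * (n + m) ^ i := by
  rw [← Nat.factorial_mul_ascFactorial]
  gcongr
  exact (Nat.ascFactorial_le_pow_add n i).trans (by gcongr)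

lemma abs_eval_bernoulliSum_mul_X_pow_le (m : ℕ) {n : ℕ} (hn : n ≠ 0) (u : ℝ) {x : ℝ}
    (hx : x ∈ Set.Icc 0 1) :
    |(bernoulliSum ((X + C u) ^ m * X ^ n)).eval x| ≤
      4 * n ! / (2 * π) ^ (n + 1) * (|u| + (n + m) / (2 * π)) ^ m := by
  have hexpand : ((X + C u) ^ m * X ^ n : ℝ[X]) =
      ∑ i ∈ range (m + 1), (m.choose i * u ^ (m - i)) • X ^ (n + i) := by
    rw [add_pow, sum_mul]
    refine sum_congr rfl fun i _ ↦ ?_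
    rw [smul_eq_C_mul, pow_add]
    simp only [map_mul, map_pow, map_natCast]
    ring
  have hterm (i : ℕ) (hi : i ∈ range (m + 1)) :
      |(bernoulliSum (X ^ (n + i))).eval x| ≤
        4 * n ! / (2 * π) ^ (n + 1) * ((n + m) / (2 * π)) ^ i := by
    refine (abs_eval_bernoulliSum_X_pow_le (by omega) hx).trans ?_
    have hfact : ((n + i)! : ℝ) ≤ n ! * (n + m) ^ i := by
      exact_mod_cast factorial_add_le n (Nat.lt_succ_iff.1 (mem_range.1 hi))
    calc 4 * ((n + i)! : ℝ) / (2 * π) ^ (n + i + 1)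
        ≤ 4 * (n ! * (n + m) ^ i) / (2 * π) ^ (n + i + 1) := by gcongr
      _ = 4 * n ! / (2 * π) ^ (n + 1) * ((n + m) / (2 * π)) ^ i := by
        rw [div_pow]
        field_simp
        ring
  simp only [hexpand, map_sum, map_smul, eval_finsetSum, eval_smul, smul_eq_mul]
  refine (abs_sum_le_sum_abs _ _).trans ?_
  rw [add_comm |u|, add_pow, mul_sum]
  refine sum_le_sum fun i hi ↦ ?_
  rw [abs_mul, abs_mul, Nat.abs_cast, abs_pow]
  calc m.choose i * |u| ^ (m - i) * |(bernoulliSum (X ^ (n + i))).eval x|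
      ≤ m.choose i * |u| ^ (m - i) *
        (4 * n ! / (2 * π) ^ (n + 1) * ((n + m) / (2 * π)) ^ i) := by
        gcongr
        exact hterm i hi
    _ = _ := by ring

lemma sum_pow_mul_truncPow_sub (m : ℕ) {n : ℕ} (hn : n ≠ 0) (N : ℕ) {u : ℝ} (hu : |u| ≤ N + 1) :
    ∑ k ∈ Icc (-(N : ℤ)) N, (k : ℝ) ^ m * truncPow n (k - u) =
      (bernoulliSum (X ^ m * (X - C u) ^ n)).eval (N + 1 : ℝ) -
        (bernoulliSum (X ^ m * (X - C u) ^ n)).eval (⌈u⌉ : ℝ) := by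
  rw [abs_le] at hu
  have hceil : ⌈u⌉ ≤ N + 1 := Int.ceil_le.2 (by push_cast; exact hu.2)
  have hIco := sum_Ico_eval_eq_bernoulliSum_sub (X ^ m * (X - C u) ^ n) hceil
  push_cast at hIco
  rw [← hIco]
  refine sum_congr_of_eq_on_inter (fun k hk hk' ↦ ?_) (fun k hk hk' ↦ ?_) fun k hk hk' ↦ ?_
  all_goals simp only [mem_Icc, mem_Ico, not_and_or, not_le, not_lt] at hk hk'
  · have hku : (k : ℝ) < u := Int.lt_ceil.1 (by omega)
    rw [truncPow_of_nonpos (by linarith), mul_zero]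
  · have hku : u ≤ k := Int.ceil_le.1 hk.1
    have hkN : (k : ℝ) ≤ -(N + 1) := by exact_mod_cast (by omega : k ≤ -((N : ℤ) + 1))
    have hroot : (k : ℝ) - u = 0 := by linarith
    simp [hroot, hn]
  · have hku : u ≤ k := Int.ceil_le.1 hk'.1
    rw [truncPow_of_nonneg hn (sub_nonneg.2 hku)]
    simp

/-! ### Moments of the sampled spline -/

lemma gtilde_div_two_mul {s : ℕ} (hs : 2 ≤ s) {M x : ℝ} (hM : 0 < M) (hx : |x| ≤ M) :
    gtilde s (x / (2 * M)) =
      (∑ j ∈ range (2 * s), (-1) ^ (s + j) * truncPow (s - 1) (x - M * node s j)) /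
        (M ^ (s - 1) * (s - 1)!) := by
  have hmem : x / M ∈ Set.Icc (-1) 1 := by
    rw [abs_le] at hx
    rwa [Set.mem_Icc, le_div_iff₀ hM, div_le_iff₀ hM, neg_one_mul, one_mul]
  obtain ⟨n, rfl⟩ : ∃ n, s = n + 2 := Nat.exists_eq_add_of_le' hs
  rw [gtilde, show 2 * (x / (2 * M)) = x / M by field_simp, show n + 2 - 1 = n + 1 by omega,
    fspline_eq_nodeSpline (by omega) n hmem, nodeSpline, sum_div]
  refine sum_congr rfl fun j _ ↦ ?_
  rw [show x - M * node (n + 2) j = M * (x / M - node (n + 2) j) by field_simp, truncPow_mul hM]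
  field_simp

/-- The unnormalised `m`-th moment `∑ kᵐ g̃(k / (2 (N + 1)))` of the sampled spline; the one of
order `0` is `gnorm s N`. -/
noncomputable def discreteMoment (s N m : ℕ) : ℝ :=
  ∑ k ∈ Icc (-(N : ℤ)) N, (k : ℝ) ^ m * gtilde s (k / (2 * (N + 1)))

lemma discreteMoment_eq_sum_truncPow {s : ℕ} (hs : 2 ≤ s) (N m : ℕ) :
    discreteMoment s N m =
      (∑ j ∈ range (2 * s), (-1) ^ (s + j) * ∑ k ∈ Icc (-(N : ℤ)) N,
        (k : ℝ) ^ m * truncPow (s - 1) (k - (N + 1) * node s j)) /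
          ((N + 1) ^ (s - 1) * (s - 1)!) := by
  have hM : (0 : ℝ) < N + 1 := by positivity
  calc discreteMoment s N m
      = ∑ k ∈ Icc (-(N : ℤ)) N, (k : ℝ) ^ m * ((∑ j ∈ range (2 * s), (-1) ^ (s + j) *
          truncPow (s - 1) (k - (N + 1) * node s j)) / ((N + 1) ^ (s - 1) * (s - 1)!)) := by
        refine sum_congr rfl fun k hk ↦ ?_
        have hkN : |(k : ℝ)| ≤ N := by exact_mod_cast abs_le.2 (mem_Icc.1 hk)
        rw [gtilde_div_two_mul hs hM (by linarith)]
    _ = _ := by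
        simp only [mul_div_assoc', ← sum_div, mul_sum]
        rw [sum_comm]
        simp only [mul_left_comm]

lemma sum_alternating_sub_mul_node_pow {s n : ℕ} (hn : n < s) (t c : ℝ) :
    ∑ j ∈ range (2 * s), (-1) ^ j * (t - c * node s j) ^ n = 0 := by
  simp only [sub_eq_add_neg, add_pow, mul_sum]
  rw [sum_comm]
  refine sum_eq_zero fun i _ ↦ ?_
  have hzero := sum_alternating_node_pow_of_lt ((n.sub_le i).trans_lt hn)
  calc _ = t ^ i * (-c) ^ (n - i) * n.choose i *
        ∑ j ∈ range (2 * s), (-1) ^ j * node s j ^ (n - i) := by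
        rw [mul_sum]
        refine sum_congr rfl fun j _ ↦ ?_
        rw [← neg_mul, mul_pow]
        ring
    _ = 0 := by rw [hzero, mul_zero]

lemma sum_alternating_bernoulliSum_eq_zero {s n : ℕ} (hn : n < s) (m : ℕ) (c x : ℝ) :
    ∑ j ∈ range (2 * s), (-1) ^ (s + j) *
      (bernoulliSum (X ^ m * (X - C (c * node s j)) ^ n)).eval x = 0 := by
  have hzero : ∑ j ∈ range (2 * s), ((-1) ^ (s + j) : ℝ) •
      (X ^ m * (X - C (c * node s j)) ^ n : ℝ[X]) = 0 := by
    refine Polynomial.funext fun t ↦ ?_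
    simp only [eval_finsetSum, eval_smul, eval_mul, eval_pow, eval_X, eval_sub, eval_C, eval_zero,
      smul_eq_mul]
    calc _ = (-1) ^ s * t ^ m * ∑ j ∈ range (2 * s), (-1) ^ j * (t - c * node s j) ^ n := by
          rw [mul_sum]
          exact sum_congr rfl fun j _ ↦ by ring
      _ = 0 := by rw [sum_alternating_sub_mul_node_pow hn, mul_zero]
  simpa [map_sum, eval_finsetSum] using congrArg (fun p ↦ (bernoulliSum p).eval x) hzero

lemma eval_bernoulliSum_ceil (m n : ℕ) (u : ℝ) :
    (bernoulliSum (X ^ m * (X - C u) ^ n)).eval (⌈u⌉ : ℝ) =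
      (bernoulliSum ((X + C u) ^ m * X ^ n)).eval (⌈u⌉ - u) +
        (-1) ^ n * m ! * n ! / (m + n + 1)! * u ^ (m + n + 1) := by
  have h := eval_add_bernoulliSum (X ^ m * (X - C u) ^ n) (⌈u⌉ - u) u
  simpa [integral_pow_mul_sub_pow] using h

/-- The sum of the Bernoulli remainders at the `2 s` knots, which separates the discrete moment of
order `m` of the sampled spline from its continuous counterpart. -/
noncomputable def bernoulliRemainder (s N m : ℕ) : ℝ :=
  ∑ j ∈ range (2 * s), (-1) ^ (s + j) *
    (bernoulliSum ((X + C ((N + 1) * node s j)) ^ m * X ^ (s - 1))).eval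
      (⌈(N + 1) * node s j⌉ - (N + 1) * node s j)

lemma discreteMoment_eq_sub_bernoulliRemainder {s : ℕ} (hs : 2 ≤ s) (N m : ℕ) :
    discreteMoment s N m =
      (m ! * (s - 1)! / (s + m)! * (N + 1) ^ (s + m) *
        (∑ j ∈ range (2 * s), (-1) ^ j * node s j ^ (s + m)) - bernoulliRemainder s N m) /
          ((N + 1) ^ (s - 1) * (s - 1)!) := by
  have hnode (j : ℕ) : |((N : ℝ) + 1) * node s j| ≤ N + 1 := abs_mul_node_le (by positivity) s j
  have hidx : m + (s - 1) + 1 = s + m := by omega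
  have hsign : (-1 : ℝ) ^ s = -(-1) ^ (s - 1) := by
    rw [← Nat.sub_add_cancel (one_le_two.trans hs), pow_succ, Nat.add_sub_cancel]
    ring
  rw [discreteMoment_eq_sum_truncPow hs]
  congr 1
  simp only [sum_pow_mul_truncPow_sub m (by omega : s - 1 ≠ 0) N (hnode _), mul_sub,
    sum_sub_distrib, sum_alternating_bernoulliSum_eq_zero (by omega : s - 1 < s), zero_sub,
    eval_bernoulliSum_ceil, mul_add, sum_add_distrib, hidx, neg_add, bernoulliRemainder, mul_sum]
  rw [neg_add_eq_sub, sub_eq_add_neg, sub_eq_add_neg, ← sum_neg_distrib, add_left_inj]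
  refine sum_congr rfl fun j _ ↦ ?_
  rw [pow_add, hsign, mul_pow]
  have hsq : ((-1 : ℝ) ^ (s - 1)) * (-1) ^ (s - 1) = 1 := by
    rw [← mul_pow, neg_one_mul, neg_neg, one_pow]
  linear_combination (m ! * (s - 1)! / (s + m)! * (-1 : ℝ) ^ j * (N + 1) ^ (s + m) *
    node s j ^ (s + m)) * hsq

/-- The continuous moment `∫ x²ᵖ g(x) dx` of the perfect spline `g = g_{s-1}`, divided by `∫ g`;
the formula holds for `p < s`. -/
noncomputable def limitMoment (s p : ℕ) : ℝ := s ! * (2 * p)! / (4 ^ p * p ! * (s + p)!)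

lemma limitMoment_zero (s : ℕ) : limitMoment s 0 = 1 := by
  simp [limitMoment, Nat.factorial_ne_zero]

lemma limitMoment_one (s : ℕ) : limitMoment s 1 = 1 / (2 * (s + 1)) := by
  simp only [limitMoment, Nat.factorial_succ, Nat.factorial_zero]
  push_cast
  field_simp
  norm_num

lemma limitMoment_two (s : ℕ) : limitMoment s 2 = 3 / (4 * (s + 2) * (s + 1)) := by
  simp only [limitMoment, Nat.factorial_succ, Nat.factorial_zero]
  push_cast
  field_simp
  ring

lemma limitMoment_three (s : ℕ) : limitMoment s 3 = 15 / 8 * (s ! / (s + 3)!) := by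
  rw [limitMoment, show (2 * 3)! = 720 from rfl, show 3 ! = 6 from rfl]
  push_cast
  field_simp
  norm_num

lemma limitMoment_nonneg (s p : ℕ) : 0 ≤ limitMoment s p := by
  rw [limitMoment]
  positivity

lemma limitMoment_le_one (s p : ℕ) : limitMoment s p ≤ 1 := by
  have hcentral : (2 * p)! ≤ 4 ^ p * p ! * p ! := by
    calc (2 * p)! = p.centralBinom * p ! * p ! := by
          rw [Nat.centralBinom, two_mul, Nat.add_choose_mul_factorial_mul_factorial]
      _ ≤ 4 ^ p * p ! * p ! := by
          gcongr
          rw [Nat.centralBinom, show 4 = 2 ^ 2 by rfl, ← pow_mul]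
          exact Nat.choose_le_two_pow _ _
  have hadd : s ! * p ! ≤ (s + p)! :=
    Nat.le_of_dvd (Nat.factorial_pos _) (Nat.factorial_mul_factorial_dvd_factorial_add s p)
  rw [limitMoment]
  refine div_le_one_of_le₀ ?_ (by positivity)
  norm_cast
  calc s ! * (2 * p)! ≤ s ! * (4 ^ p * p ! * p !) := by gcongr
    _ = 4 ^ p * p ! * (s ! * p !) := by ring
    _ ≤ 4 ^ p * p ! * (s + p)! := by gcongr

/-- The leading term `(N + 1) ∫ g_{s-1}` of the discrete norm `gnorm s N`. -/
noncomputable def splineMass (s N : ℕ) : ℝ := 4 * (N + 1) / (2 ^ s * (s - 1)!)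

lemma splineMass_pos (s N : ℕ) : 0 < splineMass s N := by
  rw [splineMass]
  positivity

lemma discreteMoment_two_mul {s p : ℕ} (hs : 2 ≤ s) (hp : p < s) (N : ℕ) :
    discreteMoment s N (2 * p) = splineMass s N * (N + 1) ^ (2 * p) * limitMoment s p -
      bernoulliRemainder s N (2 * p) / ((N + 1) ^ (s - 1) * (s - 1)!) := by
  rw [discreteMoment_eq_sub_bernoulliRemainder hs, sub_div, sub_left_inj,
    sum_alternating_node_pow_add_two_mul hp]
  obtain ⟨n, rfl⟩ : ∃ n, s = n + 1 := Nat.exists_eq_add_of_le' (one_le_two.trans hs)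
  have hchoose : ((n + 1 + 2 * p)! : ℝ) = (n + 1 + 2 * p).choose p * (n + 1 + p)! * p ! := by
    have h := Nat.add_choose_mul_factorial_mul_factorial (n + 1 + p) p
    rw [add_assoc (n + 1), ← two_mul] at h
    exact_mod_cast h.symm
  have hC : ((n + 1 + 2 * p).choose p : ℝ) ≠ 0 := by
    exact_mod_cast (Nat.choose_pos (by omega)).ne'
  have hpow : (1 / 2 : ℝ) ^ (n + 1 + 2 * p) = 1 / (2 ^ (n + 1) * 4 ^ p) := by
    rw [one_div_pow, pow_add, pow_mul]
    norm_num
  rw [hchoose, hpow, splineMass, limitMoment, Nat.add_sub_cancel, Nat.factorial_succ n]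
  push_cast
  field_simp
  ring

lemma abs_bernoulliRemainder_le {s : ℕ} (hs : 2 ≤ s) (N m : ℕ) :
    |bernoulliRemainder s N m| ≤
      2 * s * (4 * (s - 1)! / (2 * π) ^ s * (N + 1 + (s + m) / (2 * π)) ^ m) := by
  have hterm (j : ℕ) : |(-1) ^ (s + j) *
      (bernoulliSum ((X + C ((N + 1) * node s j)) ^ m * X ^ (s - 1))).eval
        (⌈(N + 1) * node s j⌉ - (N + 1) * node s j)| ≤
      4 * (s - 1)! / (2 * π) ^ s * (N + 1 + (s + m) / (2 * π)) ^ m := by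
    rw [abs_mul, abs_neg_one_pow, one_mul]
    have hu : |((N : ℝ) + 1) * node s j| ≤ N + 1 := abs_mul_node_le (by positivity) s j
    set u := ((N : ℝ) + 1) * node s j
    have hceil : (⌈u⌉ : ℝ) - u ∈ Set.Icc 0 1 :=
      ⟨sub_nonneg.2 (Int.le_ceil u), by linarith [Int.ceil_lt_add_one u]⟩
    have hs1 : ((s - 1 : ℕ) : ℝ) ≤ s := by exact_mod_cast s.sub_le 1
    refine (abs_eval_bernoulliSum_mul_X_pow_le m (by omega) u hceil).trans ?_
    rw [Nat.sub_add_cancel (by omega)]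
    gcongr
  refine (abs_sum_le_sum_abs _ _).trans ((sum_le_card_nsmul _ _ _ fun j _ ↦ hterm j).trans_eq ?_)
  rw [card_range, nsmul_eq_mul, Nat.cast_mul, Nat.cast_ofNat]

lemma abs_bernoulliRemainder_div_le {s N m : ℕ} (hs : 2 ≤ s) (hm : m ≤ s) (hN : 2 * s ≤ N + 1) :
    |bernoulliRemainder s N m / ((N + 1) ^ (s - 1) * (s - 1)!)| ≤
      splineMass s N * (N + 1) ^ m * (2 * (7 / 6) ^ m / 6 ^ s) := by
  have hN' : 2 * (s : ℝ) ≤ N + 1 := by exact_mod_cast hN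
  have hm' : (m : ℝ) ≤ s := by exact_mod_cast hm
  have hπ : 3 < π := Real.pi_gt_three
  have hbase : ((N : ℝ) + 1 + (s + m) / (2 * π)) ≤ 7 / 6 * (N + 1) := by
    have : (s + m) / (2 * π) ≤ (N + 1) / 6 :=
      div_le_div₀ (by positivity) (by linarith) (by norm_num) (by linarith)
    linarith
  have hfact : (s ! : ℝ) ≤ ((N + 1) / 2) ^ s := by
    calc (s ! : ℝ) ≤ s ^ s := by exact_mod_cast s.factorial_le_pow
      _ ≤ ((N + 1) / 2) ^ s := by
        gcongr
        linarith
  rw [abs_div, abs_of_pos (by positivity : (0 : ℝ) < (N + 1) ^ (s - 1) * (s - 1)!),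
    div_le_iff₀ (by positivity)]
  calc |bernoulliRemainder s N m|
      ≤ 2 * s * (4 * (s - 1)! / (2 * π) ^ s * (N + 1 + (s + m) / (2 * π)) ^ m) :=
        abs_bernoulliRemainder_le hs N m
    _ ≤ 2 * s * (4 * (s - 1)! / 6 ^ s * (7 / 6 * (N + 1)) ^ m) := by
        gcongr
        linarith
    _ = 8 * s ! / 6 ^ s * (7 / 6 * (N + 1)) ^ m := by
        rw [← Nat.mul_factorial_pred (by omega : s ≠ 0)]
        push_cast
        ring
    _ ≤ 8 * ((N + 1) / 2) ^ s / 6 ^ s * (7 / 6 * (N + 1)) ^ m := by gcongr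
    _ = splineMass s N * (N + 1) ^ m * (2 * (7 / 6) ^ m / 6 ^ s) *
        ((N + 1) ^ (s - 1) * (s - 1)!) := by
        obtain ⟨n, rfl⟩ : ∃ n, s = n + 1 := Nat.exists_eq_add_of_le' (one_le_two.trans hs)
        rw [splineMass, div_pow, mul_pow, Nat.add_sub_cancel, pow_succ _ n]
        field_simp
        ring

lemma abs_discreteMoment_div_sub_le {s N p : ℕ} (hs : 2 ≤ s) (hp : 2 * p ≤ s)
    (hN : 2 * s ≤ N + 1) :
    |discreteMoment s N (2 * p) / (splineMass s N * (N + 1) ^ (2 * p)) - limitMoment s p| ≤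
      2 * (7 / 6) ^ (2 * p) / 6 ^ s := by
  have hmain : 0 < splineMass s N * (N + 1) ^ (2 * p) :=
    mul_pos (splineMass_pos s N) (by positivity)
  rw [div_sub' hmain.ne', abs_div, abs_of_pos hmain, div_le_iff₀' hmain,
    discreteMoment_two_mul hs (by omega), sub_sub_cancel_left, abs_neg]
  exact abs_bernoulliRemainder_div_le hs hp hN

/-! ### Derivatives of the kernel -/

lemma sigmaT_eq_sum_cos (s N : ℕ) (t : ℝ) :
    sigmaT s N t = ∑ k ∈ Icc (-(N : ℤ)) N,
      (gnorm s N)⁻¹ * gtilde s (k / (2 * (N + 1))) * Real.cos (k * t) := by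
  rw [sigmaT, one_div, ← Complex.ofReal_inv, Complex.re_ofReal_mul, Complex.re_sum, mul_sum]
  refine sum_congr rfl fun k _ ↦ ?_
  have harg : (k : ℂ) * t * Complex.I = (k * t : ℝ) * Complex.I := by push_cast; ring
  rw [Complex.re_ofReal_mul, harg, Complex.exp_ofReal_mul_I_re, mul_assoc]

lemma discreteMoment_zero (s N : ℕ) : discreteMoment s N 0 = gnorm s N := by
  simp only [discreteMoment, gnorm, pow_zero, one_mul]

lemma iteratedDeriv_even_sigmaT_zero (s N p : ℕ) :
    iteratedDeriv (2 * p) (sigmaT s N) 0 =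
      (-1) ^ p * (discreteMoment s N (2 * p) / discreteMoment s N 0) := by
  have hcos (k : ℤ) : ContDiffAt ℝ (2 * p : ℕ) (fun t : ℝ ↦ (gnorm s N)⁻¹ *
      gtilde s (k / (2 * (N + 1))) * Real.cos (k * t)) 0 := by fun_prop
  rw [funext (sigmaT_eq_sum_cos s N), iteratedDeriv_fun_sum fun k _ ↦ hcos k, discreteMoment_zero,
    discreteMoment, sum_div, mul_sum]
  refine sum_congr rfl fun k _ ↦ ?_
  rw [iteratedDeriv_const_mul_field, iteratedDeriv_comp_const_mul Real.contDiff_cos,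
    Real.iteratedDeriv_even_cos]
  simp only [mul_zero, Pi.mul_apply, Pi.pow_apply, Pi.neg_apply, Pi.one_apply, Real.cos_zero]
  ring

lemma abs_div_sub_le {a b κ ε δ : ℝ} (ha : |a - κ| ≤ ε) (hb : |b - 1| ≤ δ) (hδ : δ < 1)
    (hκ : |κ| ≤ 1) : |a / b - κ| ≤ (ε + δ) / (1 - δ) := by
  have hb1 : 1 - δ ≤ b := by linarith [(abs_le.1 hb).1]
  have hb0 : 0 < b := by linarith
  have hnum : |a - κ - κ * (b - 1)| ≤ ε + δ := by
    calc |a - κ - κ * (b - 1)| ≤ |a - κ| + |κ| * |b - 1| := by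
          rw [← abs_mul]
          exact abs_sub _ _
      _ ≤ ε + 1 * δ := by gcongr
      _ = ε + δ := by rw [one_mul]
  calc |a / b - κ| = |a - κ - κ * (b - 1)| / b := by
        rw [← abs_of_pos hb0, ← abs_div, abs_of_pos hb0]
        congr 1
        field_simp
        ring
    _ ≤ (ε + δ) / (1 - δ) := by
        gcongr
        exact (abs_nonneg _).trans hnum

/-- A bound for the distance between the normalised discrete moment of order `2 p` and
`limitMoment s p`, valid as soon as `2 s ≤ N + 1`. -/
noncomputable def momentError (s p : ℕ) : ℝ := 6 * (7 / 6) ^ (2 * p) / 6 ^ s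

lemma abs_discreteMoment_div_discreteMoment_zero_sub_le {s N p : ℕ} (hs : 2 ≤ s)
    (hp : 2 * p ≤ s) (hN : 2 * s ≤ N + 1) :
    |discreteMoment s N (2 * p) / discreteMoment s N 0 / (N + 1) ^ (2 * p) - limitMoment s p| ≤
      momentError s p := by
  have hmass : splineMass s N ≠ 0 := (splineMass_pos s N).ne'
  have hκ : |limitMoment s p| ≤ 1 :=
    (abs_of_nonneg (limitMoment_nonneg s p)).trans_le (limitMoment_le_one s p)
  have hnum := abs_discreteMoment_div_sub_le hs hp hN
  have hden : |discreteMoment s N 0 / splineMass s N - 1| ≤ 2 / 6 ^ s := by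
    simpa [limitMoment_zero] using abs_discreteMoment_div_sub_le (p := 0) hs (by omega) hN
  have hε : (0 : ℝ) ≤ 2 * (7 / 6) ^ (2 * p) / 6 ^ s := by positivity
  have hδ : (2 : ℝ) / 6 ^ s ≤ 1 / 18 := by
    calc (2 : ℝ) / 6 ^ s ≤ 2 / 6 ^ 2 := div_le_div_of_nonneg_left (by norm_num) (by norm_num)
          (pow_le_pow_right₀ (by norm_num) hs)
      _ = 1 / 18 := by norm_num
  have hδε : (2 : ℝ) / 6 ^ s ≤ 2 * (7 / 6) ^ (2 * p) / 6 ^ s :=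
    div_le_div_of_nonneg_right (le_mul_of_one_le_right zero_le_two (one_le_pow₀ (by norm_num)))
      (by positivity)
  calc _ = |discreteMoment s N (2 * p) / (splineMass s N * (N + 1) ^ (2 * p)) /
          (discreteMoment s N 0 / splineMass s N) - limitMoment s p| := by
        congr 2
        field_simp
    _ ≤ (2 * (7 / 6) ^ (2 * p) / 6 ^ s + 2 / 6 ^ s) / (1 - 2 / 6 ^ s) :=
        abs_div_sub_le hnum hden (by linarith) hκ
    _ ≤ 3 * (2 * (7 / 6) ^ (2 * p) / 6 ^ s) := by
        rw [div_le_iff₀ (by linarith)]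
        nlinarith [mul_le_mul_of_nonneg_left hδ hε]
    _ = momentError s p := by
        rw [momentError]
        ring

theorem abs_abs_iteratedDeriv_sigmaT_sub_le {s N p : ℕ} (hs : 2 ≤ s) (hp : 2 * p ≤ s)
    (hN : 2 * s ≤ N + 1) :
    |(|iteratedDeriv (2 * p) (sigmaT s N) 0|) - limitMoment s p * (N + 1) ^ (2 * p)| ≤
      momentError s p * (N + 1) ^ (2 * p) := by
  have hpow : (0 : ℝ) < (N + 1) ^ (2 * p) := by positivity
  set r := discreteMoment s N (2 * p) / discreteMoment s N 0 / (N + 1) ^ (2 * p) with hr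
  have hderiv : |iteratedDeriv (2 * p) (sigmaT s N) 0| = |r| * (N + 1) ^ (2 * p) := by
    rw [iteratedDeriv_even_sigmaT_zero, abs_mul, abs_neg_one_pow, one_mul, hr, abs_div _ (_ ^ _),
      abs_of_pos hpow, div_mul_cancel₀ _ hpow.ne']
  calc _ = |(|r| - |limitMoment s p|)| * (N + 1) ^ (2 * p) := by
        rw [hderiv, ← sub_mul, abs_mul, abs_of_pos hpow, abs_of_nonneg (limitMoment_nonneg s p)]
    _ ≤ |r - limitMoment s p| * (N + 1) ^ (2 * p) :=
        mul_le_mul_of_nonneg_right (abs_abs_sub_abs_le _ _) hpow.le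
    _ ≤ _ := by
        gcongr
        exact abs_discreteMoment_div_discreteMoment_zero_sub_le hs hp hN

lemma abs_iteratedDeriv_sigmaT_mem_Icc {s N p : ℕ} {η : ℝ} (hs : 2 ≤ s) (hp : 2 * p ≤ s)
    (hN : 2 * s ≤ N + 1) (hη : momentError s p ≤ η * limitMoment s p) :
    |iteratedDeriv (2 * p) (sigmaT s N) 0| ∈
      Set.Icc ((1 - η) * limitMoment s p * (N + 1) ^ (2 * p))
        ((1 + η) * limitMoment s p * (N + 1) ^ (2 * p)) := by
  have herr : momentError s p * ((N : ℝ) + 1) ^ (2 * p) ≤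
      η * limitMoment s p * (N + 1) ^ (2 * p) := by gcongr
  have hdist := abs_le.1 ((abs_abs_iteratedDeriv_sigmaT_sub_le hs hp hN).trans herr)
  constructor <;> linarith [hdist.1, hdist.2]

lemma mul_le_six_pow {s : ℕ} (hs : 8 ≤ s) :
    1500 * ((s + 1) * (s + 2) * (s + 3)) ≤ 6 ^ s := by
  induction s, hs using Nat.le_induction with
  | base => norm_num
  | succ s hs ih =>
    calc 1500 * ((s + 1 + 1) * (s + 1 + 2) * (s + 1 + 3))
        = 1500 * ((s + 2) * (s + 3)) * (s + 4) := by ring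
      _ ≤ 1500 * ((s + 2) * (s + 3)) * (6 * (s + 1)) := by
          gcongr
          omega
      _ = 1500 * ((s + 1) * (s + 2) * (s + 3)) * 6 := by ring
      _ ≤ 6 ^ s * 6 := by gcongr
      _ = 6 ^ (s + 1) := (pow_succ 6 s).symm

lemma div_six_pow_le {s : ℕ} (hs : 8 ≤ s) {c : ℝ} (hc : 0 ≤ c) :
    c / 6 ^ s ≤ c / (1500 * ((s + 1) * (s + 2) * (s + 3))) := by
  gcongr
  exact_mod_cast mul_le_six_pow hs

lemma momentError_le_mul_limitMoment_one {s : ℕ} (hs : 8 ≤ s) :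
    momentError s 1 ≤ 0.001 * limitMoment s 1 := by
  have hs' : (8 : ℝ) ≤ s := by exact_mod_cast hs
  refine (div_six_pow_le hs (by positivity)).trans ?_
  rw [limitMoment_one, mul_one_div, div_le_div_iff₀ (by positivity) (by positivity)]
  nlinarith [mul_nonneg (sub_nonneg.2 hs') (sub_nonneg.2 hs')]

lemma momentError_le_mul_limitMoment_two {s : ℕ} (hs : 8 ≤ s) :
    momentError s 2 ≤ 0.001 * limitMoment s 2 := by
  have hs' : (8 : ℝ) ≤ s := by exact_mod_cast hs
  refine (div_six_pow_le hs (by positivity)).trans ?_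
  rw [limitMoment_two, mul_div_assoc', div_le_div_iff₀ (by positivity) (by positivity)]
  nlinarith [mul_nonneg (sub_nonneg.2 hs') (by positivity : (0 : ℝ) ≤ (s + 1) * (s + 2))]

lemma momentError_le_mul_limitMoment_three {s : ℕ} (hs : 8 ≤ s) :
    momentError s 3 ≤ 0.011 * limitMoment s 3 := by
  have hfact : ((s + 3)! : ℝ) = (s + 3) * (s + 2) * (s + 1) * s ! := by
    simp only [Nat.factorial_succ]
    push_cast
    ring
  refine (div_six_pow_le hs (by positivity)).trans ?_
  rw [limitMoment_three, hfact, ← mul_assoc]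
  field_simp
  norm_num

theorem derivative_bounds_of_kernel_at_zero_general {s N : ℕ} (hs : 8 ≤ s) (hN : 2 * s ≤ N + 1) :
    (0.999 / (2 * (s + 1)) * (N + 1) ^ 2 ≤ |iteratedDeriv 2 (sigmaT s N) 0| ∧
      |iteratedDeriv 2 (sigmaT s N) 0| ≤ 1.001 / (2 * (s + 1)) * (N + 1) ^ 2) ∧
    (3 * 0.999 / (4 * (s + 2) * (s + 1)) * (N + 1) ^ 4 ≤ |iteratedDeriv 4 (sigmaT s N) 0| ∧
      |iteratedDeriv 4 (sigmaT s N) 0| ≤ 3 * 1.001 / (4 * (s + 2) * (s + 1)) * (N + 1) ^ 4) ∧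
    (0.989 * (15 / 8) * (s ! / (s + 3)!) * (N + 1) ^ 6 ≤ |iteratedDeriv 6 (sigmaT s N) 0| ∧
      |iteratedDeriv 6 (sigmaT s N) 0| ≤
        1.011 * (15 / 8) * (s ! / (s + 3)!) * (N + 1) ^ 6) := by
  have hs2 : 2 ≤ s := by omega
  have h₂ := abs_iteratedDeriv_sigmaT_mem_Icc hs2 (by omega) hN
    (momentError_le_mul_limitMoment_one hs)
  have h₄ := abs_iteratedDeriv_sigmaT_mem_Icc hs2 (by omega) hN
    (momentError_le_mul_limitMoment_two hs)
  have h₆ := abs_iteratedDeriv_sigmaT_mem_Icc hs2 (by omega) hN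
    (momentError_le_mul_limitMoment_three hs)
  rw [limitMoment_one] at h₂
  rw [limitMoment_two] at h₄
  rw [limitMoment_three] at h₆
  refine ⟨⟨h₂.1.trans_eq' ?_, h₂.2.trans_eq ?_⟩, ⟨h₄.1.trans_eq' ?_, h₄.2.trans_eq ?_⟩,
    ⟨h₆.1.trans_eq' ?_, h₆.2.trans_eq ?_⟩⟩ <;> ring

end

theorem derivative_bounds_of_kernel_at_zero
    (s N : ℕ) (hs_even : Even s) (hs : 8 ≤ s) (hN : 2 * s ≤ N) :
    ((0.999 / (2 * ((s : ℝ) + 1))) * ((N : ℝ) + 1) ^ 2 ≤ |iteratedDeriv 2 (sigmaT s N) 0| ∧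
      |iteratedDeriv 2 (sigmaT s N) 0| ≤ (1.001 / (2 * ((s : ℝ) + 1))) * ((N : ℝ) + 1) ^ 2) ∧
    ((3 * 0.999 / (4 * ((s : ℝ) + 2) * ((s : ℝ) + 1))) * ((N : ℝ) + 1) ^ 4 ≤
        |iteratedDeriv 4 (sigmaT s N) 0| ∧
      |iteratedDeriv 4 (sigmaT s N) 0| ≤
        (3 * 1.001 / (4 * ((s : ℝ) + 2) * ((s : ℝ) + 1))) * ((N : ℝ) + 1) ^ 4) ∧
    (s = 8 → 20 ≤ N →
      |iteratedDeriv 6 (sigmaT 8 N) 0| ≤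
        1.011 * (15 / 8) * ((Nat.factorial 8 : ℝ) / (Nat.factorial 11)) * ((N : ℝ) + 1) ^ 6) := by
  obtain ⟨h₂, h₄, -⟩ := derivative_bounds_of_kernel_at_zero_general hs (by omega : 2 * s ≤ N + 1)
  exact ⟨h₂, h₄, fun _ _ ↦ (derivative_bounds_of_kernel_at_zero_general le_rfl (by omega)).2.2.2⟩
end

section
/- Let k ≥ 1 be an integer and let ω be a real number with 0 < ω and kω < π/2. Then: (i) k·cos(ω) − cos(kω)·sin(ω)/sin(kω) ≤ k − 1/k; (ii) 0 ≤ (1+cos ω)·sin(kω)/(2k·sin ω) − cos(kω); and (iii) (1+cos ω)·sin(kω)/(2k·sin ω) − cos(kω) ≤ 1 − cos(kω) ≤ k²ω²/2. -/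
open scoped Real

/-!
By `(1 + cos ω) / sin ω = 1 / tan (ω / 2)`, the quotient in (ii) and (iii) is
`sin (k * ω) / (2 * k * tan (ω / 2))`. It is at most `1` because
`sin (k * ω) ≤ k * ω ≤ 2 * k * tan (ω / 2)`, and (ii) is `c * tan x ≤ tan (c * x)` at `c = 2 * k`,
`x = ω / 2`, multiplied by `cos (c * x)`. With denominators cleared, this inequality and (i) are
equalities at the origin, and the derivatives of the differences factor as
`(c ^ 2 - 1) * (sin x * sin (c * x))` and `k * (k ^ 2 - 1) * ((1 - cos ω) * cos (k * ω))`.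
-/

open Real Set

theorem le_of_hasDerivAt_nonneg {f f' : ℝ → ℝ} {a b : ℝ} (hab : a ≤ b)
    (hf : ∀ x ∈ Icc a b, HasDerivAt f (f' x) x) (hf' : ∀ x ∈ Ioo a b, 0 ≤ f' x) : f a ≤ f b := by
  have hmono : MonotoneOn f (Icc a b) := by
    refine monotoneOn_of_hasDerivWithinAt_nonneg (convex_Icc a b)
      (fun x hx => (hf x hx).continuousAt.continuousWithinAt)
      (fun x hx => (hf x (interior_subset hx)).hasDerivWithinAt) ?_
    simpa only [interior_Icc] using hf'
  exact hmono (left_mem_Icc.2 hab) (right_mem_Icc.2 hab) hab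

theorem hasDerivAt_sin_const_mul (c x : ℝ) :
    HasDerivAt (fun y => sin (c * y)) (c * cos (c * x)) x := by
  simpa [mul_comm] using ((hasDerivAt_id x).const_mul c).sin

theorem hasDerivAt_cos_const_mul (c x : ℝ) :
    HasDerivAt (fun y => cos (c * y)) (-(c * sin (c * x))) x := by
  simpa [mul_comm] using ((hasDerivAt_id x).const_mul c).cos

theorem one_add_cos_eq_two_mul_cos_half_sq (x : ℝ) : 1 + cos x = 2 * cos (x / 2) ^ 2 := by
  rw [cos_sq, mul_div_cancel₀ x two_ne_zero]
  ring

theorem one_add_cos_mul_tan_half (x : ℝ) : (1 + cos x) * tan (x / 2) = sin x := by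
  rw [one_add_cos_eq_two_mul_cos_half_sq, tan_eq_sin_div_cos]
  calc 2 * cos (x / 2) ^ 2 * (sin (x / 2) / cos (x / 2))
      = 2 * sin (x / 2) * cos (x / 2) := by field_simp
    _ = sin x := by rw [← sin_two_mul, mul_div_cancel₀ x two_ne_zero]

theorem one_add_cos_mul_div_mul_sin_eq_div_mul_tan_half {x : ℝ} (hx : x ∈ Ioo (-π) π) (a b : ℝ) :
    (1 + cos x) * a / (b * sin x) = a / (b * tan (x / 2)) := by
  have hcos_half : 0 < cos (x / 2) := cos_pos_of_mem_Ioo ⟨by linarith [hx.1], by linarith [hx.2]⟩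
  have hcos : 1 + cos x ≠ 0 := by
    rw [one_add_cos_eq_two_mul_cos_half_sq]
    positivity
  rw [← one_add_cos_mul_tan_half x, mul_left_comm b, mul_div_mul_left _ _ hcos]

section Dilation

variable {c x : ℝ}

theorem mul_sin_mul_cos_mul_le_sin_mul_mul_cos (hc : 1 ≤ c) (hx : 0 ≤ x) (hcx : c * x ≤ π) :
    c * (sin x * cos (c * x)) ≤ sin (c * x) * cos x := by
  have hderiv : ∀ y, HasDerivAt (fun y => sin (c * y) * cos y - c * (sin y * cos (c * y)))
      ((c ^ 2 - 1) * (sin y * sin (c * y))) y := fun y =>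
    (((hasDerivAt_sin_const_mul c y).mul (hasDerivAt_cos y)).sub
      (((hasDerivAt_sin y).mul (hasDerivAt_cos_const_mul c y)).const_mul c)).congr_deriv (by ring)
  have hderiv_nonneg : ∀ y ∈ Ioo 0 x, 0 ≤ (c ^ 2 - 1) * (sin y * sin (c * y)) := by
    intro y ⟨hy, hyx⟩
    have hcy : c * y ≤ π := le_trans (by gcongr) hcx
    have hsin : 0 ≤ sin y :=
      sin_nonneg_of_nonneg_of_le_pi hy.le ((le_mul_of_one_le_left hy.le hc).trans hcy)
    have hsin_mul : 0 ≤ sin (c * y) := sin_nonneg_of_nonneg_of_le_pi (by positivity) hcy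
    have hc_sq : 0 ≤ c ^ 2 - 1 := sub_nonneg.2 (one_le_pow₀ hc)
    positivity
  have hle := le_of_hasDerivAt_nonneg hx (fun y _ => hderiv y) hderiv_nonneg
  simpa using hle

theorem mul_tan_mul_cos_mul_le_sin_mul (hc : 1 ≤ c) (hx : 0 ≤ x) (hx' : x < π / 2)
    (hcx : c * x ≤ π) : c * tan x * cos (c * x) ≤ sin (c * x) := by
  have hcos : 0 < cos x := cos_pos_of_mem_Ioo ⟨by linarith [pi_pos], hx'⟩
  rw [← mul_le_mul_iff_left₀ hcos]
  calc c * tan x * cos (c * x) * cos x = c * (tan x * cos x * cos (c * x)) := by ring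
    _ = c * (sin x * cos (c * x)) := by rw [tan_mul_cos hcos.ne']
    _ ≤ sin (c * x) * cos x := mul_sin_mul_cos_mul_le_sin_mul_mul_cos hc hx hcx

theorem one_sub_sq_mul_one_sub_cos_mul_sin_mul_le (hc : 1 ≤ c) (hx : 0 ≤ x)
    (hcx : c * x ≤ π / 2) :
    (1 - c ^ 2 * (1 - cos x)) * sin (c * x) ≤ c * (sin x * cos (c * x)) := by
  have hderiv : ∀ y, HasDerivAt
      (fun y => c * (sin y * cos (c * y)) - (1 - c ^ 2 * (1 - cos y)) * sin (c * y))
      (c * (c ^ 2 - 1) * ((1 - cos y) * cos (c * y))) y := fun y =>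
    ((((hasDerivAt_sin y).mul (hasDerivAt_cos_const_mul c y)).const_mul c).sub
      (((((hasDerivAt_cos y).const_sub 1).const_mul (c ^ 2)).const_sub 1).mul
        (hasDerivAt_sin_const_mul c y))).congr_deriv (by ring)
  have hderiv_nonneg : ∀ y ∈ Ioo 0 x, 0 ≤ c * (c ^ 2 - 1) * ((1 - cos y) * cos (c * y)) := by
    intro y ⟨hy, hyx⟩
    have hcy : c * y ≤ π / 2 := le_trans (by gcongr) hcx
    have hcy₀ : 0 ≤ c * y := by positivity
    have hcos_mul : 0 ≤ cos (c * y) :=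
      cos_nonneg_of_neg_pi_div_two_le_of_le (by linarith [pi_pos]) hcy
    have hcos : 0 ≤ 1 - cos y := sub_nonneg.2 (cos_le_one y)
    have hc_sq : 0 ≤ c ^ 2 - 1 := sub_nonneg.2 (one_le_pow₀ hc)
    positivity
  have hle := le_of_hasDerivAt_nonneg hx (fun y _ => hderiv y) hderiv_nonneg
  simpa using hle

end Dilation

section Quotients

variable {k ω : ℝ}

theorem mul_cos_sub_cos_mul_mul_sin_div_sin_mul_le (hk : 1 ≤ k) (hω : 0 < ω)
    (hkω : k * ω ≤ π / 2) :
    k * cos ω - cos (k * ω) * sin ω / sin (k * ω) ≤ k - 1 / k := by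
  have hsin_mul : 0 < sin (k * ω) :=
    sin_pos_of_pos_of_lt_pi (by positivity) (by linarith [pi_pos])
  have hcleared := one_sub_sq_mul_one_sub_cos_mul_sin_mul_le hk hω.le hkω
  have hdiv : 1 / k - k * (1 - cos ω) ≤ cos (k * ω) * sin ω / sin (k * ω) := by
    rw [le_div_iff₀ hsin_mul, ← mul_le_mul_iff_right₀ (zero_lt_one.trans_le hk)]
    calc k * ((1 / k - k * (1 - cos ω)) * sin (k * ω))
        = (1 - k ^ 2 * (1 - cos ω)) * sin (k * ω) := by field_simp
      _ ≤ k * (sin ω * cos (k * ω)) := hcleared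
      _ = k * (cos (k * ω) * sin ω) := by ring
  linarith

theorem cos_mul_le_one_add_cos_mul_sin_mul_div (hk : 1 ≤ 2 * k) (hω : 0 < ω) (hω' : ω < π)
    (hkω : k * ω ≤ π) : cos (k * ω) ≤ (1 + cos ω) * sin (k * ω) / (2 * k * sin ω) := by
  have htan : 0 < tan (ω / 2) := tan_pos_of_pos_of_lt_pi_div_two (by linarith) (by linarith)
  have hdouble : 2 * k * (ω / 2) = k * ω := by ring
  have hle : 2 * k * tan (ω / 2) * cos (2 * k * (ω / 2)) ≤ sin (2 * k * (ω / 2)) :=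
    mul_tan_mul_cos_mul_le_sin_mul hk (by linarith) (by linarith) (by linarith)
  rw [hdouble] at hle
  rwa [one_add_cos_mul_div_mul_sin_eq_div_mul_tan_half ⟨by linarith, hω'⟩,
    le_div_iff₀' (by positivity)]

theorem one_add_cos_mul_sin_mul_div_le_one (hk : 0 < k) (hω : 0 < ω) (hω' : ω < π) :
    (1 + cos ω) * sin (k * ω) / (2 * k * sin ω) ≤ 1 := by
  have htan : 0 < tan (ω / 2) := tan_pos_of_pos_of_lt_pi_div_two (by linarith) (by linarith)
  rw [one_add_cos_mul_div_mul_sin_eq_div_mul_tan_half ⟨by linarith, hω'⟩,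
    div_le_one (by positivity)]
  calc sin (k * ω) ≤ k * ω := sin_le (by positivity)
    _ = 2 * k * (ω / 2) := by ring
    _ ≤ 2 * k * tan (ω / 2) := by gcongr; exact le_tan (by linarith) (by linarith)

end Quotients

theorem elementary_trigonometric_inequalities_general
    (k : ℝ) (hk : 1 ≤ k) (ω : ℝ) (hω : 0 < ω) (hkω : k * ω ≤ π / 2) :
    (k * cos ω - cos (k * ω) * sin ω / sin (k * ω) ≤ k - 1 / k) ∧
    (0 ≤ (1 + cos ω) * sin (k * ω) / (2 * k * sin ω) - cos (k * ω)) ∧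
    ((1 + cos ω) * sin (k * ω) / (2 * k * sin ω) - cos (k * ω) ≤ 1 - cos (k * ω)) ∧
    (1 - cos (k * ω) ≤ k ^ 2 * ω ^ 2 / 2) := by
  have hkω_le_pi : k * ω ≤ π := by linarith [pi_pos]
  have hω_lt_pi : ω < π := by linarith [pi_pos, le_mul_of_one_le_left hω.le hk]
  refine ⟨mul_cos_sub_cos_mul_mul_sin_div_sin_mul_le hk hω hkω, sub_nonneg.2 ?_,
    sub_le_sub_right ?_ _, ?_⟩
  · exact cos_mul_le_one_add_cos_mul_sin_mul_div (by linarith) hω hω_lt_pi hkω_le_pi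
  · exact one_add_cos_mul_sin_mul_div_le_one (by linarith) hω hω_lt_pi
  · rw [← mul_pow]
    linarith [one_sub_sq_div_two_le_cos (x := k * ω)]

theorem elementary_trigonometric_inequalities
    (k : ℕ) (hk : 1 ≤ k) (ω : ℝ) (hω : 0 < ω) (hkω : (k : ℝ) * ω < π / 2) :
    ((k : ℝ) * Real.cos ω - Real.cos ((k : ℝ) * ω) * Real.sin ω / Real.sin ((k : ℝ) * ω) ≤
        (k : ℝ) - 1 / (k : ℝ)) ∧
    (0 ≤ (1 + Real.cos ω) * Real.sin ((k : ℝ) * ω) / (2 * (k : ℝ) * Real.sin ω) -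
        Real.cos ((k : ℝ) * ω)) ∧
    ((1 + Real.cos ω) * Real.sin ((k : ℝ) * ω) / (2 * (k : ℝ) * Real.sin ω) -
        Real.cos ((k : ℝ) * ω) ≤ 1 - Real.cos ((k : ℝ) * ω)) ∧
    (1 - Real.cos ((k : ℝ) * ω) ≤ (k : ℝ) ^ 2 * ω ^ 2 / 2) :=
  elementary_trigonometric_inequalities_general k (mod_cast hk) ω hω hkω.le
end
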